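/- arXiv:0808.1442 — 2 statements merged into one kernel-verified Lean document; each statement's English description precedes it below -/
import Mathlib

section
/- For every τ in the complex upper half-plane ℍ, one has 𝒬(q) + 4·ℱ₀(q)/Θ₄(τ) = E*(4τ)/η(8τ)³; explicitly, 28·η(16τ)⁸/η(8τ)⁷ + η(8τ)⁵/η(16τ)⁴ + 48·η(32τ)⁸/(η(8τ)³·η(16τ)⁴) + 4·M(q) + 4·ℱ₀(q)/Θ₄(τ) = E*(4τ)/η(8τ)³. -/
noncomputable section
open Complex Real

/-- `q = e^{2πiτ}`. -/
def nome (τ : ℂ) : ℂ := Complex.exp (2 * (π : ℂ) * I * τ)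

/-- Dedekind eta function `η(τ) = e^{πiτ/12} ∏_{n≥1} (1 − qⁿ)`. -/
def dedekindEta (τ : ℂ) : ℂ :=
  Complex.exp ((π : ℂ) * I * τ / 12) * ∏' n : ℕ, (1 - nome τ ^ (n + 1))

/-- `Θ₄(τ) = 1 + 2 Σ_{n≥1} (−1)ⁿ q^{4n²}`. -/
def Theta4 (τ : ℂ) : ℂ := 1 + 2 * ∑' n : ℕ, (-1 : ℂ) ^ (n + 1) * nome τ ^ (4 * (n + 1) ^ 2)

/-- `ℱ_t(x) = Σ_{β≥0} Σ_{α≥β+1} (−1)^{α+β} (2β+1)^t x^{4α²−(2β+1)²}`, with `α = β+1+j`. -/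
def Fser (t : ℕ) (x : ℂ) : ℂ :=
  ∑' (β : ℕ) (j : ℕ), (-1 : ℂ) ^ (β + 1 + j + β) * (2 * (β : ℂ) + 1) ^ t *
    x ^ (4 * (β + 1 + j) ^ 2 - (2 * β + 1) ^ 2)

/-- The mock theta function `M`. -/
def Mser (x : ℂ) : ℂ :=
  x⁻¹ * ∑' n : ℕ, (-1 : ℂ) ^ (n + 1) * x ^ (8 * (n + 1) ^ 2) *
    (∏ k ∈ Finset.range n, (1 - x ^ (16 * (k + 1) - 8))) /
    (∏ k ∈ Finset.range (n + 1), (1 + x ^ (16 * (k + 1) - 8)) ^ 2)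

/-- Sum of the positive odd divisors of `n`. -/
def sigmaOdd (n : ℕ) : ℕ := ∑ d ∈ n.divisors.filter (fun d => Odd d), d

/-- `E*(τ) = 1 + 24 Σ_{n≥1} σ_odd(n) qⁿ`. -/
def Estar (τ : ℂ) : ℂ := 1 + 24 * ∑' n : ℕ, (sigmaOdd (n + 1) : ℂ) * nome τ ^ (n + 1)

/-!
Put `y = q⁴`, let `θ₃ = ∑ y^(n²)`, `θ₄ = ∑ (-1)ⁿ y^(n²)`, let `ψ` be the generating function of the
triangular numbers, and let `J = (y²; y²)_∞`, so that `J³ = θ₃ θ₄ ψ(y²)`. A Bailey pair turns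
`q M ψ(y²)` into `-A` for an Appell–Lerch sum `A`, and expanding `q ℱ₀ ψ(y²)` row by row gives
`θ₄ A - θ₃ L` with `L = ∑ y²ⁿ⁺¹ / (1 + y⁴ⁿ⁺²)`. Hence `A` cancels in `M + ℱ₀ / θ₄`, and
`J³ q (M + ℱ₀ / θ₄) = -θ₃² L`. What remains is an identity between modular forms of weight two.
Since `L(y)² = y² ψ(y⁴)⁴` and `θ₃(y)² = θ₃(y²)² + 4 L(y)`, it reduces to
`E* = θ₃⁴ + 16 y ψ(y²)⁴`, and the two sides of this satisfy the same functional equation relating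
their values at `y` and at `y²`.
-/

section

open Filter Topology Finset

section Norm

variable {q : ℂ}

lemma norm_pow_lt_one (hq : ‖q‖ < 1) {n : ℕ} (hn : n ≠ 0) : ‖q ^ n‖ < 1 := by
  rw [norm_pow]
  exact pow_lt_one₀ (norm_nonneg q) hq hn

lemma one_sub_ne_zero_of_norm_lt_one (hq : ‖q‖ < 1) : 1 - q ≠ 0 :=
  sub_ne_zero.2 fun h => by simp [← h] at hq

lemma one_add_ne_zero_of_norm_lt_one (hq : ‖q‖ < 1) : 1 + q ≠ 0 := by
  rw [← sub_neg_eq_add]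
  exact one_sub_ne_zero_of_norm_lt_one (by rwa [norm_neg])

lemma norm_mul_pow_lt_one {a : ℂ} (hq : ‖q‖ < 1) (ha : ‖a‖ < 1) (n : ℕ) : ‖a * q ^ n‖ < 1 := by
  rw [norm_mul, norm_pow]
  exact (mul_le_of_le_one_right (norm_nonneg a) (pow_le_one₀ (norm_nonneg q) hq.le)).trans_lt ha

end Norm

/-- The homogeneous `q`-shifted factorial `(x - a)(x - aq)⋯(x - aqⁿ⁻¹)`, so that `(a; q)ₙ` is the
case `x = 1`. Keeping `x` free makes the case `x = 0` replace the limits `a → ∞` of the classical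
summation formulas. -/
def qPoch (x a q : ℂ) (n : ℕ) : ℂ := ∏ k ∈ range n, (x - a * q ^ k)

/-- The infinite `q`-shifted factorial `(a; q)_∞`. -/
def qPochInf (a q : ℂ) : ℂ := ∏' k : ℕ, (1 - a * q ^ k)

section qPochhammer

variable {a q : ℂ}

@[simp] lemma qPoch_zero (x a q : ℂ) : qPoch x a q 0 = 1 := prod_range_zero _

lemma qPoch_succ (x a q : ℂ) (n : ℕ) : qPoch x a q (n + 1) = qPoch x a q n * (x - a * q ^ n) :=
  prod_range_succ _ n

lemma qPoch_mul_mul (c x a q : ℂ) (n : ℕ) : qPoch (c * x) (c * a) q n = c ^ n * qPoch x a q n := by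
  simp only [qPoch, mul_assoc, ← mul_sub, prod_mul_distrib, prod_const, card_range]

lemma qPoch_mul_qPoch_neg (a q : ℂ) (n : ℕ) :
    qPoch 1 a q n * qPoch 1 (-a) q n = qPoch 1 (a ^ 2) (q ^ 2) n := by
  simp only [qPoch, ← prod_mul_distrib]
  exact prod_congr rfl fun k _ => by ring

lemma qPoch_one_ne_zero (hq : ‖q‖ < 1) (ha : ‖a‖ < 1) (n : ℕ) : qPoch 1 a q n ≠ 0 :=
  prod_ne_zero_iff.2 fun k _ => one_sub_ne_zero_of_norm_lt_one (norm_mul_pow_lt_one hq ha k)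

lemma summable_norm_mul_pow (a : ℂ) (hq : ‖q‖ < 1) : Summable fun k : ℕ => ‖-(a * q ^ k)‖ := by
  simp only [norm_neg, norm_mul, norm_pow]
  exact (summable_geometric_of_lt_one (norm_nonneg q) hq).mul_left _

lemma multipliable_one_sub_mul_pow (a : ℂ) (hq : ‖q‖ < 1) :
    Multipliable fun k : ℕ => 1 - a * q ^ k := by
  simpa only [sub_eq_add_neg] using multipliable_one_add_of_summable (summable_norm_mul_pow a hq)

lemma qPochInf_ne_zero (hq : ‖q‖ < 1) (ha : ‖a‖ < 1) : qPochInf a q ≠ 0 := by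
  simp only [qPochInf, sub_eq_add_neg]
  refine tprod_one_add_ne_zero_of_summable (fun k => ?_) (summable_norm_mul_pow a hq)
  rw [← sub_eq_add_neg]
  exact one_sub_ne_zero_of_norm_lt_one (norm_mul_pow_lt_one hq ha k)

lemma tendsto_qPoch (a : ℂ) (hq : ‖q‖ < 1) :
    Tendsto (qPoch 1 a q) atTop (𝓝 (qPochInf a q)) :=
  (multipliable_one_sub_mul_pow a hq).tendsto_prod_tprod_nat

lemma qPochInf_eq_qPoch_mul (a : ℂ) (hq : ‖q‖ < 1) (n : ℕ) :
    qPochInf a q = qPoch 1 a q n * qPochInf (a * q ^ n) q := by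
  have htail : Multipliable fun k : ℕ => 1 - a * q ^ (k + n) := by
    simpa only [pow_add, mul_comm, mul_left_comm, mul_assoc] using
      multipliable_one_sub_mul_pow (a * q ^ n) hq
  have hsplit := htail.prod_mul_tprod_nat_mul' (f := fun k => 1 - a * q ^ k)
  rw [qPochInf, ← hsplit, qPoch, qPochInf]
  congr 2 with k
  ring

lemma qPochInf_eq_one_sub_mul (a : ℂ) (hq : ‖q‖ < 1) :
    qPochInf a q = (1 - a) * qPochInf (a * q) q := by
  simpa [qPoch] using qPochInf_eq_qPoch_mul a hq 1

lemma qPochInf_zpow_of_nonpos (hq₀ : q ≠ 0) {n : ℤ} (hn : n ≤ 0) : qPochInf (q ^ n) q = 0 := by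
  refine tprod_of_exists_eq_zero ⟨n.natAbs, ?_⟩
  rw [← zpow_natCast, ← zpow_add₀ hq₀, show n + (n.natAbs : ℤ) = 0 by omega, zpow_zero, sub_self]

lemma qPochInf_mul_qPochInf_neg (a : ℂ) (hq : ‖q‖ < 1) :
    qPochInf a q * qPochInf (-a) q = qPochInf (a ^ 2) (q ^ 2) := by
  rw [qPochInf, qPochInf, ← (multipliable_one_sub_mul_pow a hq).tprod_mul
    (multipliable_one_sub_mul_pow (-a) hq), qPochInf]
  exact tprod_congr fun k => by ring

lemma qPochInf_eq_even_mul_odd (a : ℂ) (hq : ‖q‖ < 1) :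
    qPochInf a q = qPochInf a (q ^ 2) * qPochInf (a * q) (q ^ 2) := by
  have hq2 : ‖q ^ 2‖ < 1 := norm_pow_lt_one hq two_ne_zero
  have heven : ∀ k : ℕ, 1 - a * q ^ (2 * k) = 1 - a * (q ^ 2) ^ k := fun k => by ring
  have hodd : ∀ k : ℕ, 1 - a * q ^ (2 * k + 1) = 1 - a * q * (q ^ 2) ^ k := fun k => by ring
  rw [qPochInf, ← tprod_even_mul_odd (f := fun k => 1 - a * q ^ k)]
  · simp only [heven, hodd, qPochInf]
  · simpa only [heven] using multipliable_one_sub_mul_pow a hq2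
  · simpa only [hodd] using multipliable_one_sub_mul_pow (a * q) hq2

lemma qPochInf_self_eq_odd_mul_even (hq : ‖q‖ < 1) :
    qPochInf q q = qPochInf q (q ^ 2) * qPochInf (q ^ 2) (q ^ 2) := by
  rw [qPochInf_eq_even_mul_odd q hq, ← sq]

lemma qPochInf_neg_mul_qPochInf_odd (hq : ‖q‖ < 1) :
    qPochInf (-q) q * qPochInf q (q ^ 2) = 1 := by
  have hq2 : ‖q ^ 2‖ < 1 := norm_pow_lt_one hq two_ne_zero
  refine mul_right_cancel₀ (qPochInf_ne_zero hq2 hq2) ?_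
  rw [mul_assoc, ← qPochInf_self_eq_odd_mul_even hq, mul_comm, qPochInf_mul_qPochInf_neg q hq,
    one_mul]

lemma exists_norm_qPoch_le (a : ℂ) (hq : ‖q‖ < 1) : ∃ C, ∀ n, ‖qPoch 1 a q n‖ ≤ C := by
  obtain ⟨C, hC⟩ := (Metric.isBounded_range_of_tendsto _ (tendsto_qPoch a hq)).exists_norm_le
  exact ⟨C, fun n => hC _ ⟨n, rfl⟩⟩

lemma exists_norm_qPochInf_mul_pow_le (hq : ‖q‖ < 1) (ha : ‖a‖ < 1) :
    ∃ C, ∀ n : ℕ, ‖qPochInf (a * q ^ n) q‖ ≤ C := by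
  have hquot : ∀ n, qPochInf a q / qPoch 1 a q n = qPochInf (a * q ^ n) q := fun n => by
    rw [qPochInf_eq_qPoch_mul a hq n, mul_div_cancel_left₀ _ (qPoch_one_ne_zero hq ha n)]
  have hlim := (tendsto_const_nhds (x := qPochInf a q)).div (tendsto_qPoch a hq)
    (qPochInf_ne_zero hq ha)
  obtain ⟨C, hC⟩ := (Metric.isBounded_range_of_tendsto _ hlim).exists_norm_le
  exact ⟨C, fun n => hquot n ▸ hC _ ⟨n, rfl⟩⟩

end qPochhammer

section qBinomial

variable {a b q : ℂ}

lemma summable_norm_qPoch_div (a : ℂ) (hq : ‖q‖ < 1) (hb : ‖b‖ < 1) :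
    Summable fun n => ‖qPoch b a q n / qPoch 1 q q n‖ := by
  obtain ⟨r, hbr, hr⟩ := exists_between hb
  have hpow := tendsto_pow_atTop_nhds_zero_of_norm_lt_one hq
  have hratio : Tendsto (fun n => ‖(b - a * q ^ n) / (1 - q * q ^ n)‖) atTop (𝓝 ‖b‖) := by
    simpa using ((tendsto_const_nhds.sub (hpow.const_mul a)).div
      (tendsto_const_nhds.sub (hpow.const_mul q)) (by simp : (1 : ℂ) - q * 0 ≠ 0)).norm
  refine summable_of_ratio_norm_eventually_le hr ?_
  filter_upwards [hratio.eventually_le_const hbr] with n hn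
  rw [norm_norm, norm_norm, qPoch_succ, qPoch_succ, mul_div_mul_comm, norm_mul, mul_comm]
  gcongr

lemma qBinomial_functional_equation (a : ℂ) (hq : ‖q‖ < 1) (hb : ‖b‖ < 1) {x : ℂ} (hx : ‖x‖ ≤ 1) :
    (1 - b * x) * ∑' n, qPoch b a q n / qPoch 1 q q n * x ^ n =
      (1 - a * x) * ∑' n, qPoch b a q n / qPoch 1 q q n * (q * x) ^ n := by
  set c : ℕ → ℂ := fun n => qPoch b a q n / qPoch 1 q q n with hc
  have hsum : ∀ {z : ℂ}, ‖z‖ ≤ 1 → Summable fun n => c n * z ^ n := fun {z} hz =>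
    .of_norm_bounded (summable_norm_qPoch_div a hq hb) fun n => by
      rw [norm_mul, norm_pow]
      exact mul_le_of_le_one_right (norm_nonneg _) (pow_le_one₀ (norm_nonneg z) hz)
  have hqx : ‖q * x‖ ≤ 1 := by
    rw [norm_mul]
    exact mul_le_one₀ hq.le (norm_nonneg x) hx
  have hc_succ : ∀ n, (1 - q * q ^ n) * c (n + 1) = (b - a * q ^ n) * c n := fun n => by
    have hn : 1 - q * q ^ n ≠ 0 := one_sub_ne_zero_of_norm_lt_one (norm_mul_pow_lt_one hq hq n)
    simp only [hc, qPoch_succ]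
    rw [mul_div_mul_comm, mul_left_comm, mul_div_cancel₀ _ hn, mul_comm]
  have hrec : ∀ n, c (n + 1) * x ^ (n + 1) - c (n + 1) * (q * x) ^ (n + 1) =
      b * x * (c n * x ^ n) - a * x * (c n * (q * x) ^ n) := fun n => by
    linear_combination x ^ (n + 1) * hc_succ n
  have key : ∑' n, (c (n + 1) * x ^ (n + 1) - c (n + 1) * (q * x) ^ (n + 1)) =
      ∑' n, (b * x * (c n * x ^ n) - a * x * (c n * (q * x) ^ n)) := tsum_congr hrec
  rw [((summable_nat_add_iff 1).2 (hsum hx)).tsum_sub ((summable_nat_add_iff 1).2 (hsum hqx)),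
    ((hsum hx).mul_left _).tsum_sub ((hsum hqx).mul_left _), tsum_mul_left, tsum_mul_left] at key
  have h₁ := (hsum hx).tsum_eq_zero_add
  have h₂ := (hsum hqx).tsum_eq_zero_add
  rw [pow_zero] at h₁ h₂
  change (1 - b * x) * ∑' n, c n * x ^ n = (1 - a * x) * ∑' n, c n * (q * x) ^ n
  linear_combination h₁ - h₂ + key

lemma hasSum_qBinomial (a : ℂ) (hq : ‖q‖ < 1) (hb : ‖b‖ < 1) :
    HasSum (fun n => qPoch b a q n / qPoch 1 q q n) (qPochInf a q / qPochInf b q) := by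
  set c : ℕ → ℂ := fun n => qPoch b a q n / qPoch 1 q q n with hc
  have hnorm : Summable fun n => ‖c n‖ := summable_norm_qPoch_div a hq hb
  have hiter : ∀ N, qPoch 1 b q N * ∑' n, c n = qPoch 1 a q N * ∑' n, c n * (q ^ N) ^ n := by
    intro N
    induction N with
    | zero => simp
    | succ N ih =>
      have hfe := qBinomial_functional_equation a hq hb (x := q ^ N)
        (by rw [norm_pow]; exact pow_le_one₀ (norm_nonneg q) hq.le)
      rw [qPoch_succ, qPoch_succ, mul_right_comm, ih, pow_succ' q]
      linear_combination qPoch 1 a q N * hfe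
  have hlim : Tendsto (fun N : ℕ => ∑' n, c n * (q ^ N) ^ n) atTop (𝓝 (∑' n, c n * 0 ^ n)) := by
    refine tendsto_tsum_of_dominated_convergence hnorm (fun n => ?_) (.of_forall fun N n => ?_)
    · exact ((tendsto_pow_atTop_nhds_zero_of_norm_lt_one hq).pow n).const_mul (c n)
    · rw [norm_mul, norm_pow, norm_pow]
      exact mul_le_of_le_one_right (norm_nonneg _)
        (pow_le_one₀ (by positivity) (pow_le_one₀ (norm_nonneg q) hq.le))
  have hzero : ∑' n, c n * 0 ^ n = 1 := by
    rw [tsum_eq_single 0 fun n hn => by rw [zero_pow hn, mul_zero]]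
    simp [hc]
  have heq := tendsto_nhds_unique ((tendsto_qPoch b hq).mul_const _)
    (((tendsto_qPoch a hq).mul hlim).congr fun N => (hiter N).symm)
  rw [hzero, mul_one] at heq
  rw [← heq, mul_div_cancel_left₀ _ (qPochInf_ne_zero hq hb)]
  exact hnorm.of_norm.hasSum

lemma hasSum_pow_div_qPoch (hq : ‖q‖ < 1) (hb : ‖b‖ < 1) :
    HasSum (fun n => b ^ n / qPoch 1 q q n) (qPochInf b q)⁻¹ := by
  simpa [qPoch, qPochInf] using hasSum_qBinomial 0 hq hb

lemma hasSum_qPoch_zero_div (a : ℂ) (hq : ‖q‖ < 1) :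
    HasSum (fun n => qPoch 0 a q n / qPoch 1 q q n) (qPochInf a q) := by
  simpa [qPochInf] using hasSum_qBinomial a hq (b := 0) (by simp)

lemma qPochInf_mul_pow_div_eq_tsum (a : ℂ) (hq : ‖q‖ < 1) (hb : ‖b‖ < 1) (n : ℕ) :
    qPochInf (a * q ^ n) q / qPochInf (b * q ^ n) q =
      ∑' m, q ^ (n * m) * (qPoch b a q m / qPoch 1 q q m) := by
  rw [← (hasSum_qBinomial (a * q ^ n) hq (norm_mul_pow_lt_one hq hb n)).tsum_eq]
  refine tsum_congr fun m => ?_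
  rw [mul_comm b, mul_comm a, qPoch_mul_mul, ← pow_mul, mul_div_assoc]

lemma tsum_mul_tsum_pow_mul_comm {A B : ℕ → ℂ} (hA : Summable fun n => ‖A n‖)
    (hB : Summable fun n => ‖B n‖) (hq : ‖q‖ ≤ 1) :
    ∑' n, A n * ∑' m, q ^ (n * m) * B m = ∑' m, B m * ∑' n, q ^ (m * n) * A n := by
  have hsum : Summable fun x : ℕ × ℕ => A x.1 * (q ^ (x.1 * x.2) * B x.2) := by
    refine .of_norm_bounded (hA.mul_of_nonneg hB (fun _ => norm_nonneg _) fun _ => norm_nonneg _)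
      fun x => ?_
    rw [norm_mul, norm_mul, norm_pow]
    refine mul_le_mul_of_nonneg_left ?_ (norm_nonneg _)
    exact mul_le_of_le_one_left (norm_nonneg _) (pow_le_one₀ (norm_nonneg q) hq)
  have hswap : ∑' n, ∑' m, A n * (q ^ (n * m) * B m) = ∑' m, ∑' n, A n * (q ^ (n * m) * B m) :=
    (hsum.tsum_comm (f := fun n m => A n * (q ^ (n * m) * B m))).symm
  simp only [← tsum_mul_left]
  refine hswap.trans (tsum_congr fun m => tsum_congr fun n => ?_)
  rw [mul_comm n m]
  ring

lemma heine_transformation {z : ℂ} (w c : ℂ) (hq : ‖q‖ < 1) (hz : ‖z‖ < 1) (hb : ‖b‖ < 1) :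
    ∑' n : ℕ, qPoch z w q n / qPoch 1 q q n *
        (qPochInf (c * q ^ n) q / qPochInf (b * q ^ n) q) =
      ∑' n : ℕ, qPoch b c q n / qPoch 1 q q n *
        (qPochInf (w * q ^ n) q / qPochInf (z * q ^ n) q) := by
  simp only [qPochInf_mul_pow_div_eq_tsum _ hq hb, qPochInf_mul_pow_div_eq_tsum _ hq hz]
  exact tsum_mul_tsum_pow_mul_comm (summable_norm_qPoch_div w hq hz)
    (summable_norm_qPoch_div c hq hb) hq.le

/-- The limiting case `b → ∞` of the `q`-analogue of Gauss's summation formula for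
`₂φ₁(a, b; ax; x / b)`. -/
lemma tsum_qGauss_limit {x : ℂ} (hq : ‖q‖ < 1) (ha : ‖a‖ < 1) :
    ∑' n : ℕ, qPoch 0 x q n / qPoch 1 q q n *
        (qPochInf (a * x * q ^ n) q / qPochInf (a * q ^ n) q) =
      qPochInf x q / qPochInf a q := by
  have hterm : ∀ n : ℕ, qPoch a (a * x) q n / qPoch 1 q q n *
      (qPochInf (x * q ^ n) q / qPochInf (0 * q ^ n) q) =
        qPochInf x q * (a ^ n / qPoch 1 q q n) := fun n => by
    have hfac := qPoch_mul_mul a 1 x q n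
    rw [mul_one] at hfac
    rw [hfac, qPochInf_eq_qPoch_mul x hq n]
    simp only [qPochInf, zero_mul, sub_zero, tprod_one, div_one]
    ring
  rw [heine_transformation x (a * x) hq (by simp : ‖(0 : ℂ)‖ < 1) ha, tsum_congr hterm,
    tsum_mul_left, (hasSum_pow_div_qPoch hq ha).tsum_eq, div_eq_mul_inv]

end qBinomial

section TripleProduct

variable {t z : ℂ}

lemma summable_norm_zpow_mul_zpow_sq (ht₀ : t ≠ 0) (ht : ‖t‖ < 1) (hz : z ≠ 0) :
    Summable fun n : ℤ => ‖z ^ n * t ^ n ^ 2‖ := by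
  have him : 0 < (log t / (π * I)).im := by
    have him_eq : (log t / (π * I)).im = -Real.log ‖t‖ / π := by
      rw [← div_div, div_I, neg_im, mul_I_im, div_ofReal_re, log_re, neg_div]
    rw [him_eq]
    exact div_pos (neg_pos.2 (Real.log_neg (norm_pos_iff.2 ht₀) ht)) pi_pos
  refine ((summable_jacobiTheta₂_term_iff (log z / (2 * π * I)) _).2 him).norm.congr fun n => ?_
  have hz' : 2 * π * I * n * (log z / (2 * π * I)) = n * log z := by field_simp
  have ht' : π * I * n ^ 2 * (log t / (π * I)) = (n ^ 2 : ℤ) * log t := by push_cast; field_simp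
  rw [jacobiTheta₂_term, hz', ht', Complex.exp_add, exp_int_mul, exp_int_mul, exp_log hz,
    exp_log ht₀]

lemma qPoch_zero_neg_mul_sq (z t : ℂ) (n : ℕ) :
    qPoch 0 (-(z * t)) (t ^ 2) n = z ^ n * t ^ n ^ 2 := by
  induction n with
  | zero => simp
  | succ n ih => rw [qPoch_succ, ih]; ring

lemma zpow_add_mul_zpow_sq_mul (ht₀ : t ≠ 0) (hz : z ≠ 0) (n : ℤ) (m : ℕ) :
    z ^ (n + m) * t ^ (n + m) ^ 2 * (-(t / z)) ^ m =
      z ^ n * t ^ n ^ 2 * qPoch 0 ((t ^ 2) ^ (n + 1)) (t ^ 2) m := by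
  have hbase : (t ^ 2) ^ (n + 1) = -(-t ^ (2 * n + 1) * t) := by
    rw [← zpow_natCast, ← zpow_mul, neg_mul, neg_neg, ← zpow_add_one₀ ht₀]
    congr 1
    push_cast
    ring
  have hexp : (n + m) ^ 2 = n ^ 2 + (2 * n + 1) * m + m ^ 2 - (m : ℤ) := by ring
  rw [hbase, qPoch_zero_neg_mul_sq, hexp, zpow_add₀ hz, zpow_sub₀ ht₀, zpow_add₀ ht₀,
    zpow_add₀ ht₀, zpow_mul t, neg_pow (t / z), neg_pow (t ^ (2 * n + 1)), div_pow]
  norm_cast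
  field_simp

lemma hasSum_zpow_mul_qPochInf (ht₀ : t ≠ 0) (ht : ‖t‖ < 1) (z : ℂ) :
    HasSum (fun n : ℤ => z ^ n * t ^ n ^ 2 * qPochInf ((t ^ 2) ^ (n + 1)) (t ^ 2))
      (qPochInf (-(z * t)) (t ^ 2) * qPochInf (t ^ 2) (t ^ 2)) := by
  have hp : ‖t ^ 2‖ < 1 := norm_pow_lt_one ht two_ne_zero
  refine (Nat.cast_injective.hasSum_iff fun n hn => ?_).1 ?_
  · have hneg : n + 1 ≤ 0 := by
      by_contra! h
      exact hn ⟨n.toNat, by omega⟩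
    rw [qPochInf_zpow_of_nonpos (pow_ne_zero 2 ht₀) hneg, mul_zero]
  · refine ((hasSum_qPoch_zero_div (-(z * t)) hp).mul_right _).congr_fun fun n => ?_
    rw [qPoch_zero_neg_mul_sq, qPochInf_eq_qPoch_mul (t ^ 2) hp n, Function.comp_apply,
      ← mul_assoc, div_mul_cancel₀ _ (qPoch_one_ne_zero hp hp n), ← pow_succ']
    norm_cast

lemma hasSum_shift_mul {f : ℤ → ℂ} {g : ℕ → ℂ} (hf : Summable fun n => ‖f n‖)
    (hg : Summable fun m => ‖g m‖) (s : ℕ → ℤ) :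
    HasSum (fun x : ℤ × ℕ => f (x.1 + s x.2) * g x.2) ((∑' n, f n) * ∑' m, g m) := by
  have hprod := hf.of_norm.hasSum.mul hg.of_norm.hasSum (summable_mul_of_summable_norm hf hg)
  let e : ℤ × ℕ ≃ ℤ × ℕ :=
    ((Equiv.prodComm ℤ ℕ).trans
      (Equiv.prodShear (.refl ℕ) fun m : ℕ => Equiv.addRight (s m))).trans (Equiv.prodComm ℕ ℤ)
  exact e.hasSum_iff.2 hprod

lemma jacobi_triple_product_of_norm_lt (ht₀ : t ≠ 0) (ht : ‖t‖ < 1) (hz : ‖t‖ < ‖z‖) :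
    HasSum (fun n : ℤ => z ^ n * t ^ n ^ 2)
      (qPochInf (-(z * t)) (t ^ 2) * qPochInf (-(t / z)) (t ^ 2) * qPochInf (t ^ 2) (t ^ 2)) := by
  have hz₀ : z ≠ 0 := norm_pos_iff.1 ((norm_nonneg t).trans_lt hz)
  have hp : ‖t ^ 2‖ < 1 := norm_pow_lt_one ht two_ne_zero
  have hb : ‖-(t / z)‖ < 1 := by
    rwa [norm_neg, norm_div, div_lt_one (norm_pos_iff.2 hz₀)]
  have hθ := summable_norm_zpow_mul_zpow_sq ht₀ ht hz₀
  have hE : Summable fun m => ‖(-(t / z)) ^ m / qPoch 1 (t ^ 2) (t ^ 2) m‖ := by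
    simpa [qPoch] using summable_norm_qPoch_div 0 hp hb
  have hfib : HasSum (fun n : ℤ => z ^ n * t ^ n ^ 2 * qPochInf ((t ^ 2) ^ (n + 1)) (t ^ 2))
      ((∑' n : ℤ, z ^ n * t ^ n ^ 2) * (qPochInf (-(t / z)) (t ^ 2))⁻¹) := by
    rw [← (hasSum_pow_div_qPoch hp hb).tsum_eq]
    refine (hasSum_shift_mul hθ hE (↑)).prod_fiberwise fun n => ?_
    refine ((hasSum_qPoch_zero_div _ hp).mul_left (z ^ n * t ^ n ^ 2)).congr_fun fun m => ?_
    rw [mul_div_assoc', mul_div_assoc', zpow_add_mul_zpow_sq_mul ht₀ hz₀]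
  have heq := hfib.unique (hasSum_zpow_mul_qPochInf ht₀ ht z)
  rw [mul_inv_eq_iff_eq_mul₀ (qPochInf_ne_zero hp hb)] at heq
  rw [mul_right_comm, ← heq]
  exact hθ.of_norm.hasSum

theorem jacobi_triple_product (ht₀ : t ≠ 0) (ht : ‖t‖ < 1) (hz : z ≠ 0) :
    HasSum (fun n : ℤ => z ^ n * t ^ n ^ 2)
      (qPochInf (-(z * t)) (t ^ 2) * qPochInf (-(t / z)) (t ^ 2) * qPochInf (t ^ 2) (t ^ 2)) := by
  rcases lt_or_ge ‖t‖ ‖z‖ with h | h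
  · exact jacobi_triple_product_of_norm_lt ht₀ ht h
  · have hinv : ‖t‖ < ‖z⁻¹‖ := by
      rw [norm_inv]
      exact ht.trans ((one_lt_inv₀ (norm_pos_iff.2 hz)).2 (h.trans_lt ht))
    have hsymm := (Equiv.neg ℤ).hasSum_iff.2 (jacobi_triple_product_of_norm_lt ht₀ ht hinv)
    rw [div_inv_eq_mul, mul_comm z⁻¹, ← div_eq_mul_inv, mul_comm t z,
      mul_comm (qPochInf (-(t / z)) _)] at hsymm
    refine hsymm.congr_fun fun n => ?_
    simp

end TripleProduct

/-- The theta function `∑ y^(n²)` over all integers `n`. -/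
def theta3 (y : ℂ) : ℂ := ∑' n : ℤ, y ^ n ^ 2

/-- The theta function `∑ (-1)ⁿ y^(n²)` over all integers `n`. -/
def theta4 (y : ℂ) : ℂ := ∑' n : ℤ, (-1) ^ n * y ^ n ^ 2

/-- Gauss's generating function `ψ(y) = ∑ y^(n(n+1)/2)` of the triangular numbers, in product
form. -/
def gaussPsi (y : ℂ) : ℂ := qPochInf (y ^ 2) (y ^ 2) / qPochInf y (y ^ 2)

section Theta

variable {y : ℂ}

lemma summable_norm_theta3 (hy₀ : y ≠ 0) (hy : ‖y‖ < 1) : Summable fun n : ℤ => ‖y ^ n ^ 2‖ := by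
  simpa using summable_norm_zpow_mul_zpow_sq hy₀ hy one_ne_zero

lemma summable_norm_theta4 (hy₀ : y ≠ 0) (hy : ‖y‖ < 1) :
    Summable fun n : ℤ => ‖(-1) ^ n * y ^ n ^ 2‖ :=
  summable_norm_zpow_mul_zpow_sq hy₀ hy (neg_ne_zero.2 one_ne_zero)

lemma theta3_eq_qPochInf (hy₀ : y ≠ 0) (hy : ‖y‖ < 1) :
    theta3 y = qPochInf (-y) (y ^ 2) ^ 2 * qPochInf (y ^ 2) (y ^ 2) := by
  simpa [theta3, sq] using (jacobi_triple_product hy₀ hy one_ne_zero).tsum_eq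

lemma theta4_eq_qPochInf (hy₀ : y ≠ 0) (hy : ‖y‖ < 1) :
    theta4 y = qPochInf y (y ^ 2) ^ 2 * qPochInf (y ^ 2) (y ^ 2) := by
  simpa [theta4, div_neg, sq] using
    (jacobi_triple_product hy₀ hy (neg_ne_zero.2 one_ne_zero)).tsum_eq

lemma theta3_neg (hy₀ : y ≠ 0) (hy : ‖y‖ < 1) : theta3 (-y) = theta4 y := by
  rw [theta3_eq_qPochInf (neg_ne_zero.2 hy₀) (by rwa [norm_neg]), theta4_eq_qPochInf hy₀ hy,
    neg_neg, neg_sq]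

lemma qPochInf_sq_ne_zero (hy : ‖y‖ < 1) : qPochInf (y ^ 2) (y ^ 2) ≠ 0 :=
  have h := norm_pow_lt_one hy two_ne_zero
  qPochInf_ne_zero h h

lemma qPochInf_odd_ne_zero (hy : ‖y‖ < 1) : qPochInf y (y ^ 2) ≠ 0 :=
  qPochInf_ne_zero (norm_pow_lt_one hy two_ne_zero) hy

lemma theta4_ne_zero (hy₀ : y ≠ 0) (hy : ‖y‖ < 1) : theta4 y ≠ 0 := by
  rw [theta4_eq_qPochInf hy₀ hy]
  exact mul_ne_zero (pow_ne_zero 2 (qPochInf_odd_ne_zero hy)) (qPochInf_sq_ne_zero hy)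

lemma qPochInf_odd_mul_neg (hy : ‖y‖ < 1) :
    qPochInf y (y ^ 2) * qPochInf (-y) (y ^ 2) = qPochInf (y ^ 2) (y ^ 4) := by
  rw [qPochInf_mul_qPochInf_neg y (norm_pow_lt_one hy two_ne_zero), ← pow_mul]

lemma qPochInf_sq_eq_odd_mul_even (hy : ‖y‖ < 1) :
    qPochInf (y ^ 2) (y ^ 2) = qPochInf (y ^ 2) (y ^ 4) * qPochInf (y ^ 4) (y ^ 4) := by
  rw [qPochInf_self_eq_odd_mul_even (norm_pow_lt_one hy two_ne_zero), ← pow_mul]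

lemma gaussPsi_eq_neg (hy : ‖y‖ < 1) :
    gaussPsi y = qPochInf (-y) (y ^ 2) * qPochInf (y ^ 4) (y ^ 4) := by
  rw [gaussPsi, qPochInf_sq_eq_odd_mul_even hy, ← qPochInf_odd_mul_neg hy, mul_assoc,
    mul_div_cancel_left₀ _ (qPochInf_odd_ne_zero hy)]

lemma gaussPsi_eq_sq_div (hy : ‖y‖ < 1) :
    gaussPsi y = qPochInf (y ^ 2) (y ^ 2) ^ 2 / qPochInf y y := by
  rw [gaussPsi, qPochInf_self_eq_odd_mul_even hy, sq (qPochInf (y ^ 2) _),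
    mul_div_mul_right _ _ (qPochInf_sq_ne_zero hy)]

lemma theta4_eq_sq_div (hy₀ : y ≠ 0) (hy : ‖y‖ < 1) :
    theta4 y = qPochInf y y ^ 2 / qPochInf (y ^ 2) (y ^ 2) := by
  rw [theta4_eq_qPochInf hy₀ hy, qPochInf_self_eq_odd_mul_even hy]
  have := qPochInf_sq_ne_zero hy
  field_simp

lemma theta3_mul_theta4 (hy₀ : y ≠ 0) (hy : ‖y‖ < 1) :
    theta3 y * theta4 y = theta4 (y ^ 2) ^ 2 := by
  rw [theta3_eq_qPochInf hy₀ hy, theta4_eq_qPochInf hy₀ hy,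
    theta4_eq_qPochInf (pow_ne_zero 2 hy₀) (norm_pow_lt_one hy two_ne_zero), ← pow_mul,
    qPochInf_sq_eq_odd_mul_even hy, ← qPochInf_odd_mul_neg hy]
  ring

lemma gaussPsi_sq (hy₀ : y ≠ 0) (hy : ‖y‖ < 1) :
    gaussPsi y ^ 2 = gaussPsi (y ^ 2) * theta3 y := by
  have hne := qPochInf_odd_ne_zero (norm_pow_lt_one hy two_ne_zero)
  rw [← pow_mul] at hne
  rw [gaussPsi_eq_neg hy, theta3_eq_qPochInf hy₀ hy, gaussPsi, ← pow_mul,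
    qPochInf_sq_eq_odd_mul_even hy, div_mul_eq_mul_div, eq_div_iff hne]
  ring

lemma hasSum_gaussPsi (hy₀ : y ≠ 0) (hy : ‖y‖ < 1) :
    HasSum (fun n : ℤ => y ^ (n * (2 * n + 1))) (gaussPsi y) := by
  have hy2 := norm_pow_lt_one hy two_ne_zero
  have hsplit := qPochInf_eq_even_mul_odd (-y) hy2
  have hval : qPochInf (-(y * y ^ 2)) ((y ^ 2) ^ 2) * qPochInf (-(y ^ 2 / y)) ((y ^ 2) ^ 2) *
      qPochInf ((y ^ 2) ^ 2) ((y ^ 2) ^ 2) = gaussPsi y := by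
    rw [gaussPsi_eq_neg hy, hsplit, sq y, mul_div_cancel_right₀ _ hy₀]
    ring_nf
  rw [← hval]
  refine (jacobi_triple_product (pow_ne_zero 2 hy₀) hy2 hy₀).congr_fun fun n => ?_
  rw [← zpow_natCast, ← zpow_mul, ← zpow_add₀ hy₀]
  congr 1
  push_cast
  ring

lemma hasSum_gaussPsi_of_shift (hy₀ : y ≠ 0) (hy : ‖y‖ < 1) (j : ℤ) :
    HasSum (fun m : ℤ => y ^ ((2 * m - j) * (2 * m - j + 1))) (gaussPsi (y ^ 2)) := by
  have hψ := hasSum_gaussPsi (pow_ne_zero 2 hy₀) (norm_pow_lt_one hy two_ne_zero)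
  simp only [← zpow_natCast, ← zpow_mul] at hψ
  obtain ⟨k, rfl | rfl⟩ := j.even_or_odd'
  · refine ((Equiv.subRight k).hasSum_iff.2 hψ).congr_fun fun m => congrArg (y ^ ·) ?_
    simp only [Equiv.subRight_apply]
    push_cast
    ring
  · refine ((Equiv.subLeft k).hasSum_iff.2 hψ).congr_fun fun m => congrArg (y ^ ·) ?_
    simp only [Equiv.subLeft_apply]
    push_cast
    ring

lemma hasSum_zpow_mul_add_one (hy₀ : y ≠ 0) (hy : ‖y‖ < 1) :
    HasSum (fun n : ℤ => y ^ (n * (n + 1))) (2 * gaussPsi (y ^ 2)) := by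
  have hy2 := norm_pow_lt_one hy two_ne_zero
  have hne := qPochInf_odd_ne_zero hy2
  have hval : qPochInf (-(y * y)) (y ^ 2) * qPochInf (-(y / y)) (y ^ 2) *
      qPochInf (y ^ 2) (y ^ 2) = 2 * gaussPsi (y ^ 2) := by
    rw [div_self hy₀, qPochInf_eq_one_sub_mul (-1) hy2, gaussPsi, ← sq, neg_one_mul,
      ← qPochInf_mul_qPochInf_neg (y ^ 2) hy2, eq_comm, mul_div_assoc', div_eq_iff hne]
    linear_combination (-2 * qPochInf (y ^ 2) (y ^ 2) * qPochInf (-y ^ 2) (y ^ 2)) *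
      qPochInf_neg_mul_qPochInf_odd hy2
  rw [← hval]
  refine (jacobi_triple_product hy₀ hy hy₀).congr_fun fun n => ?_
  rw [← zpow_add₀ hy₀]
  ring_nf

lemma isCompl_range_rotate : IsCompl (Set.range fun x : ℤ × ℤ => (x.1 + x.2, x.1 - x.2))
    (Set.range fun x : ℤ × ℤ => (x.1 + x.2 + 1, x.1 - x.2)) := by
  refine isCompl_iff.2 ⟨Set.disjoint_left.2 ?_, codisjoint_iff_le_sup.2 ?_⟩
  · rintro _ ⟨⟨m, n⟩, rfl⟩ ⟨⟨k, l⟩, h⟩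
    simp only [Prod.mk.injEq] at h
    omega
  · rintro ⟨a, b⟩ -
    rcases Int.even_or_odd' (a + b) with ⟨k, hk | hk⟩
    · exact .inl ⟨(k, a - k), by ext <;> simp; omega⟩
    · exact .inr ⟨(k, a - k - 1), by ext <;> simp <;> omega⟩

lemma hasSum_of_rotate {f : ℤ × ℤ → ℂ} {a b : ℂ}
    (ha : HasSum (fun x : ℤ × ℤ => f (x.1 + x.2, x.1 - x.2)) a)
    (hb : HasSum (fun x : ℤ × ℤ => f (x.1 + x.2 + 1, x.1 - x.2)) b) : HasSum f (a + b) := by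
  have hinj₁ : Function.Injective fun x : ℤ × ℤ => (x.1 + x.2, x.1 - x.2) := by
    rintro ⟨k, l⟩ ⟨m, n⟩ h
    simp only [Prod.mk.injEq] at h ⊢
    omega
  have hinj₂ : Function.Injective fun x : ℤ × ℤ => (x.1 + x.2 + 1, x.1 - x.2) := by
    rintro ⟨k, l⟩ ⟨m, n⟩ h
    simp only [Prod.mk.injEq] at h ⊢
    omega
  exact (hinj₁.hasSum_range_iff.2 ha).add_isCompl isCompl_range_rotate
    (hinj₂.hasSum_range_iff.2 hb)

lemma hasSum_mul_self {ι : Type*} {f : ι → ℂ} (hf : Summable fun i => ‖f i‖) :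
    HasSum (fun x : ι × ι => f x.1 * f x.2) ((∑' i, f i) ^ 2) :=
  sq (∑' i, f i) ▸ hf.of_norm.hasSum.mul hf.of_norm.hasSum (summable_mul_of_summable_norm hf hf)

lemma theta3_sq (hy₀ : y ≠ 0) (hy : ‖y‖ < 1) :
    theta3 y ^ 2 = theta3 (y ^ 2) ^ 2 + 4 * y * gaussPsi (y ^ 4) ^ 2 := by
  have hy2₀ := pow_ne_zero 2 hy₀
  have hy2 := norm_pow_lt_one hy two_ne_zero
  have htri := hasSum_zpow_mul_add_one hy2₀ hy2
  have htri_sq := (hasSum_mul_self htri.summable.norm).mul_left y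
  rw [htri.tsum_eq, ← pow_mul] at htri_sq
  have heven : HasSum (fun x : ℤ × ℤ => y ^ (x.1 + x.2) ^ 2 * y ^ (x.1 - x.2) ^ 2)
      (theta3 (y ^ 2) ^ 2) := by
    refine (hasSum_mul_self (summable_norm_theta3 hy2₀ hy2)).congr_fun fun x => ?_
    simp only [← zpow_natCast, ← zpow_mul, ← zpow_add₀ hy₀]
    congr 1
    push_cast
    ring
  have hodd : HasSum (fun x : ℤ × ℤ => y ^ (x.1 + x.2 + 1) ^ 2 * y ^ (x.1 - x.2) ^ 2)
      (y * (2 * gaussPsi (y ^ 4)) ^ 2) := by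
    refine htri_sq.congr_fun fun x => ?_
    simp only [← zpow_natCast, ← zpow_mul, ← zpow_add₀ hy₀, ← zpow_one_add₀ hy₀]
    congr 1
    push_cast
    ring
  have hsq := hasSum_mul_self (summable_norm_theta3 hy₀ hy)
  have heq := hsq.unique (hasSum_of_rotate (f := fun x => y ^ x.1 ^ 2 * y ^ x.2 ^ 2) heven hodd)
  rw [theta3, heq]
  ring

end Theta

/-- The Lambert series `∑ y²ⁿ⁺¹ / (1 + y⁴ⁿ⁺²)`, which counts representations by sums of two odd
squares. -/
def lambertTwo (y : ℂ) : ℂ := ∑' n : ℕ, y ^ (2 * n + 1) / (1 + y ^ (4 * n + 2))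

section LambertTwo

variable {t y : ℂ}

lemma heine_summand_left (ht : ‖t‖ < 1) (n : ℕ) :
    qPoch t (-t ^ 2) (t ^ 2) n / qPoch 1 (t ^ 2) (t ^ 2) n *
        (qPochInf (-(t * t ^ 2) * (t ^ 2) ^ n) (t ^ 2) / qPochInf (t ^ 2 * (t ^ 2) ^ n) (t ^ 2)) =
      qPochInf (-t) (t ^ 2) / qPochInf (t ^ 2) (t ^ 2) * (t ^ n / (1 + t * (t ^ 2) ^ n)) := by
  have hp := norm_pow_lt_one ht two_ne_zero
  have hfac : qPoch t (-t ^ 2) (t ^ 2) n = t ^ n * qPoch 1 (-t) (t ^ 2) n := by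
    rw [← qPoch_mul_mul, mul_one, mul_neg, ← sq]
  have hne := qPoch_one_ne_zero hp hp n
  have htail := qPochInf_ne_zero hp (norm_mul_pow_lt_one hp hp n)
  have hden := one_add_ne_zero_of_norm_lt_one (norm_mul_pow_lt_one hp ht n)
  rw [hfac, qPochInf_eq_qPoch_mul (-t) hp (n + 1), qPochInf_eq_qPoch_mul (t ^ 2) hp n, qPoch_succ,
    show -(t * t ^ 2) * (t ^ 2) ^ n = -t * (t ^ 2) ^ (n + 1) by ring]
  field_simp
  ring

lemma heine_summand_right (ht : ‖t‖ < 1) (n : ℕ) :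
    qPoch (t ^ 2) (-(t * t ^ 2)) (t ^ 2) n / qPoch 1 (t ^ 2) (t ^ 2) n *
        (qPochInf (-t ^ 2 * (t ^ 2) ^ n) (t ^ 2) / qPochInf (t * (t ^ 2) ^ n) (t ^ 2)) =
      qPochInf (-t ^ 2) (t ^ 2) / qPochInf t (t ^ 2) *
        (qPoch (t ^ 2) ((t ^ 2) ^ 2) ((t ^ 2) ^ 2) n /
          qPoch 1 ((t ^ 2) ^ 2) ((t ^ 2) ^ 2) n) := by
  have hp := norm_pow_lt_one ht two_ne_zero
  have hp' : ‖-t ^ 2‖ < 1 := by rwa [norm_neg]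
  have hnum : qPoch (t ^ 2) ((t ^ 2) ^ 2) ((t ^ 2) ^ 2) n =
      qPoch (t ^ 2) (-(t * t ^ 2)) (t ^ 2) n * qPoch 1 t (t ^ 2) n := by
    simp only [qPoch, ← prod_mul_distrib]
    exact prod_congr rfl fun k _ => by ring
  have hne := qPoch_one_ne_zero hp hp n
  have hne' := qPoch_one_ne_zero hp hp' n
  have hne_t := qPoch_one_ne_zero hp ht n
  have htail := qPochInf_ne_zero hp (norm_mul_pow_lt_one hp ht n)
  rw [hnum, ← qPoch_mul_qPoch_neg (t ^ 2), qPochInf_eq_qPoch_mul (-t ^ 2) hp n,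
    qPochInf_eq_qPoch_mul t hp n]
  field_simp

/-- Heine's transformation with `(z, w, b, c) = (t, -t², t², -t³)` and base `t²` turns this Lambert
series into a series which the `q`-binomial theorem with base `t⁴` sums. -/
lemma tsum_pow_div_one_add (ht : ‖t‖ < 1) :
    ∑' n : ℕ, t ^ n / (1 + t * (t ^ 2) ^ n) = gaussPsi (t ^ 2) ^ 2 := by
  have hp := norm_pow_lt_one ht two_ne_zero
  have hheine := heine_transformation (-t ^ 2) (-(t * t ^ 2)) hp ht hp
  rw [tsum_congr (heine_summand_left ht), tsum_congr (heine_summand_right ht), tsum_mul_left,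
    tsum_mul_left, (hasSum_qBinomial _ (norm_pow_lt_one hp two_ne_zero) hp).tsum_eq,
    ← gaussPsi] at hheine
  have hψ : gaussPsi (t ^ 2) = qPochInf (t ^ 2) (t ^ 2) * qPochInf (-t ^ 2) (t ^ 2) /
      (qPochInf t (t ^ 2) * qPochInf (-t) (t ^ 2)) := by
    rw [qPochInf_mul_qPochInf_neg _ hp, qPochInf_mul_qPochInf_neg _ hp, gaussPsi]
  have hne := qPochInf_sq_ne_zero ht
  have hne_neg : qPochInf (-t) (t ^ 2) ≠ 0 := qPochInf_ne_zero hp (by rwa [norm_neg])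
  have hne_t := qPochInf_odd_ne_zero ht
  rw [sq (gaussPsi _)]
  nth_rewrite 1 [hψ]
  field_simp at hheine ⊢
  linear_combination hheine

lemma lambertTwo_eq (hy : ‖y‖ < 1) : lambertTwo y = y * gaussPsi (y ^ 4) ^ 2 := by
  have hsum := tsum_pow_div_one_add (norm_pow_lt_one hy two_ne_zero)
  rw [← pow_mul] at hsum
  rw [← hsum, lambertTwo, ← tsum_mul_left]
  exact tsum_congr fun n => by ring

lemma theta3_sq_eq_add_lambertTwo (hy₀ : y ≠ 0) (hy : ‖y‖ < 1) :
    theta3 y ^ 2 = theta3 (y ^ 2) ^ 2 + 4 * lambertTwo y := by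
  rw [theta3_sq hy₀ hy, lambertTwo_eq hy]
  ring

end LambertTwo

/-- The Lambert series `∑ (2m + 1) y⁽²ᵐ⁺¹⁾⁽²ⁿ⁺¹⁾`, which counts representations by sums of four odd
squares. -/
def lambertFour (y : ℂ) : ℂ :=
  ∑' x : ℕ × ℕ, (2 * (x.1 : ℂ) + 1) * y ^ ((2 * x.1 + 1) * (2 * x.2 + 1))

section LambertFour

variable {y : ℂ}

lemma summable_norm_mul_pow_mul (hy : ‖y‖ < 1) :
    Summable fun x : ℕ × ℕ => ‖(x.1 : ℂ) * y ^ (x.1 * (x.2 + 1))‖ := by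
  have hmaj := (summable_norm_pow_mul_geometric_of_norm_lt_one 1 hy).mul_of_nonneg
    (summable_geometric_of_lt_one (norm_nonneg y) hy) (fun _ => norm_nonneg _)
    fun _ => pow_nonneg (norm_nonneg y) _
  refine hmaj.of_nonneg_of_le (fun _ => norm_nonneg _) fun ⟨m, n⟩ => ?_
  simp only [norm_mul, norm_pow, pow_one, mul_assoc, ← pow_add]
  rcases m.eq_zero_or_pos with rfl | hm
  · simp
  · have hle : m + n ≤ m * (n + 1) := by nlinarith
    gcongr ?_ * ?_
    exact pow_le_pow_of_le_one (norm_nonneg y) hy.le hle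

lemma summable_norm_eisensteinOdd (hy : ‖y‖ < 1) :
    Summable fun x : ℕ × ℕ => ‖(2 * (x.1 : ℂ) + 1) * y ^ ((2 * x.1 + 1) * (x.2 + 1))‖ := by
  have hinj : Function.Injective fun x : ℕ × ℕ => (2 * x.1 + 1, x.2) := by
    rintro ⟨a, b⟩ ⟨c, d⟩ h
    simp only [Prod.mk.injEq] at h ⊢
    omega
  refine ((summable_norm_mul_pow_mul hy).comp_injective hinj).congr fun x => ?_
  rw [Function.comp_apply]
  push_cast
  rfl

lemma hasSum_lambertFour (hy : ‖y‖ < 1) :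
    HasSum (fun x : ℕ × ℕ => (2 * (x.1 : ℂ) + 1) * y ^ ((2 * x.1 + 1) * (2 * x.2 + 1)))
      (lambertFour y) := by
  have hinj : Function.Injective fun x : ℕ × ℕ => (x.1, 2 * x.2) := by
    rintro ⟨a, b⟩ ⟨c, d⟩ h
    simp only [Prod.mk.injEq] at h ⊢
    omega
  exact ((summable_norm_eisensteinOdd hy).of_norm.comp_injective hinj).hasSum

lemma hasSum_int_telescope {h : ℤ → ℂ} {a b : ℂ} (hsum : Summable fun m => h (m + 1) - h m)
    (htop : Tendsto h atTop (𝓝 a)) (hbot : Tendsto h atBot (𝓝 b)) :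
    HasSum (fun m => h (m + 1) - h m) (a - b) := by
  have hcast : Tendsto (fun n : ℕ => (n : ℤ)) atTop atTop := tendsto_natCast_atTop_atTop
  have hpos : HasSum (fun n : ℕ => h (n + 1) - h n) (a - h 0) := by
    refine (hsum.comp_injective Nat.cast_injective).hasSum_iff_tendsto_nat.2 ?_
    refine ((htop.comp hcast).sub_const (h 0)).congr fun n => ?_
    simpa using (sum_range_sub (fun k : ℕ => h k) n).symm
  have hneg : HasSum (fun n : ℕ => h (-(n + 1) + 1) - h (-(n + 1))) (h 0 - b) := by
    have hinj : Function.Injective fun n : ℕ => (-(n + 1) : ℤ) := fun m n hmn => by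
      simpa using hmn
    refine (hsum.comp_injective hinj).hasSum_iff_tendsto_nat.2 ?_
    refine ((hbot.comp (tendsto_neg_atTop_atBot.comp hcast)).const_sub (h 0)).congr fun n => ?_
    simpa using (sum_range_sub' (fun k : ℕ => h (-k)) n).symm
  rw [← sub_add_sub_cancel a (h 0) b]
  exact hpos.of_nat_of_neg_add_one (f := fun m => h (m + 1) - h m) hneg

lemma hasSum_int_telescope_shift {h : ℤ → ℂ} {a b : ℂ} (hsum : Summable fun m => h (m + 1) - h m)
    (htop : Tendsto h atTop (𝓝 a)) (hbot : Tendsto h atBot (𝓝 b)) (s : ℕ) :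
    HasSum (fun m => h (m + s) - h m) (s * (a - b)) := by
  induction s with
  | zero => simp
  | succ s ih =>
    have hshift := (Equiv.addRight (s : ℤ)).hasSum_iff.2 (hasSum_int_telescope hsum htop hbot)
    convert! hshift.add ih using 1
    · ext m
      simp [add_assoc]
    · push_cast
      ring

lemma one_add_zpow_ne_zero (hy : ‖y‖ < 1) {k : ℤ} (hk : k ≠ 0) : 1 + y ^ k ≠ 0 := by
  intro h
  have hnorm : ‖y‖ ^ k = 1 := by
    rw [← norm_zpow, eq_neg_of_add_eq_zero_right h, norm_neg, norm_one]
  exact hk ((zpow_eq_one_iff_right₀ (norm_nonneg y) hy.ne).1 hnorm)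

lemma norm_inv_one_add_pow_le (hy : ‖y‖ < 1) {k : ℕ} (hk : k ≠ 0) :
    ‖(1 + y ^ k)⁻¹‖ ≤ (1 - ‖y‖)⁻¹ := by
  rw [norm_inv]
  refine inv_anti₀ (sub_pos.2 hy) ?_
  have htri := norm_sub_le_norm_add 1 (y ^ k)
  have hpow : ‖y ^ k‖ ≤ ‖y‖ := by
    rw [norm_pow]
    exact pow_le_of_le_one (norm_nonneg y) hy.le hk
  rw [norm_one] at htri
  linarith

lemma summable_norm_pow_div_one_add_pow (hy : ‖y‖ < 1) {d e : ℕ → ℕ} (hd : ∀ n, n ≤ d n)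
    (he : ∀ n, e n ≠ 0) : Summable fun n => ‖y ^ d n / (1 + y ^ e n)‖ := by
  refine ((summable_geometric_of_lt_one (norm_nonneg y) hy).mul_right (1 - ‖y‖)⁻¹).of_nonneg_of_le
    (fun _ => norm_nonneg _) fun n => ?_
  rw [div_eq_mul_inv, norm_mul, norm_pow]
  exact mul_le_mul (pow_le_pow_of_le_one (norm_nonneg y) hy.le (hd n))
    (norm_inv_one_add_pow_le hy (he n)) (norm_nonneg _) (by positivity)

/-- The summand of the Lambert series `lambertTwo`, for all integer values of the index. -/
def lambertTwoTerm (y : ℂ) (m : ℤ) : ℂ := y ^ (2 * m + 1) / (1 + y ^ (4 * m + 2))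

lemma lambertTwoTerm_natCast (y : ℂ) (n : ℕ) :
    lambertTwoTerm y n = y ^ (2 * n + 1) / (1 + y ^ (4 * n + 2)) := by
  rw [lambertTwoTerm]
  norm_cast

lemma lambertTwoTerm_neg_add_one (hy₀ : y ≠ 0) (hy : ‖y‖ < 1) (m : ℤ) :
    lambertTwoTerm y (-(m + 1)) = lambertTwoTerm y m := by
  have h₁ := one_add_zpow_ne_zero hy (k := 4 * m + 2) (by omega)
  have h₂ := one_add_zpow_ne_zero hy (k := 4 * -(m + 1) + 2) (by omega)
  rw [lambertTwoTerm, lambertTwoTerm, div_eq_div_iff h₂ h₁, mul_add, mul_add, mul_one, mul_one,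
    ← zpow_add₀ hy₀, ← zpow_add₀ hy₀]
  ring_nf

lemma summable_norm_lambertTwoTerm (hy₀ : y ≠ 0) (hy : ‖y‖ < 1) :
    Summable fun m : ℤ => ‖lambertTwoTerm y m‖ := by
  have hnat : Summable fun n : ℕ => ‖lambertTwoTerm y n‖ := by
    simp only [lambertTwoTerm_natCast]
    exact summable_norm_pow_div_one_add_pow hy (fun n => by omega) fun n => by omega
  refine .of_nat_of_neg_add_one hnat (hnat.congr fun n => ?_)
  rw [lambertTwoTerm_neg_add_one hy₀ hy]

lemma tsum_int_of_neg_add_one_eq {f : ℤ → ℂ} (hf : Summable f) (hsymm : ∀ m, f (-(m + 1)) = f m) :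
    ∑' m, f m = 2 * ∑' n : ℕ, f n := by
  have hnat : Summable fun n : ℕ => f n := hf.comp_injective Nat.cast_injective
  rw [tsum_of_nat_of_neg_add_one hnat (by simpa only [hsymm] using hnat)]
  simp only [hsymm, two_mul]

lemma tsum_lambertTwoTerm (hy₀ : y ≠ 0) (hy : ‖y‖ < 1) :
    ∑' m : ℤ, lambertTwoTerm y m = 2 * lambertTwo y := by
  rw [tsum_int_of_neg_add_one_eq (summable_norm_lambertTwoTerm hy₀ hy).of_norm
    (lambertTwoTerm_neg_add_one hy₀ hy)]
  simp only [lambertTwoTerm_natCast, lambertTwo]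

lemma lambertTwoTerm_mul_shift (hy₀ : y ≠ 0) (hy : ‖y‖ < 1) {s : ℕ} (hs : s ≠ 0) (m : ℤ) :
    lambertTwoTerm y m * lambertTwoTerm y (m + s) = y ^ (2 * s) / (1 - y ^ (4 * s)) *
      ((1 + y ^ (4 * (m + s) + 2))⁻¹ - (1 + y ^ (4 * m + 2))⁻¹) := by
  have h₁ := one_add_zpow_ne_zero hy (k := 4 * m + 2) (by omega)
  have h₂ := one_add_zpow_ne_zero hy (k := 4 * (m + s) + 2) (by omega)
  have h₃ : 1 - y ^ (4 * s) ≠ 0 :=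
    one_sub_ne_zero_of_norm_lt_one (norm_pow_lt_one hy (by omega))
  have hshift : y ^ (4 * (m + s) + 2) = y ^ (4 * m + 2) * y ^ (4 * s) := by
    rw [← zpow_natCast, ← zpow_add₀ hy₀]
    push_cast
    ring_nf
  have hmul : y ^ (2 * m + 1) * y ^ (2 * (m + s) + 1) = y ^ (2 * s) * y ^ (4 * m + 2) := by
    rw [← zpow_natCast, ← zpow_add₀ hy₀, ← zpow_add₀ hy₀]
    push_cast
    ring_nf
  rw [hshift] at h₂
  rw [lambertTwoTerm, lambertTwoTerm, div_mul_div_comm, hmul, hshift]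
  field_simp
  ring

lemma tendsto_inv_one_add_zpow_atTop (hy : ‖y‖ < 1) :
    Tendsto (fun m : ℤ => (1 + y ^ (4 * m + 2))⁻¹) atTop (𝓝 1) := by
  rw [← Nat.map_cast_int_atTop, tendsto_map'_iff]
  have hpow : Tendsto (fun n : ℕ => y ^ (4 * n + 2)) atTop (𝓝 0) :=
    (tendsto_pow_atTop_nhds_zero_of_norm_lt_one hy).comp
      (tendsto_atTop_mono (fun n => by simp; omega) tendsto_id)
  refine Tendsto.congr (fun n => ?_) (by simpa using (hpow.const_add 1).inv₀ (by simp))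
  rw [Function.comp_apply]
  norm_cast

lemma tendsto_inv_one_add_zpow_atBot (hy₀ : y ≠ 0) (hy : ‖y‖ < 1) :
    Tendsto (fun m : ℤ => (1 + y ^ (4 * m + 2))⁻¹) atBot (𝓝 0) := by
  have hrefl : Tendsto (fun m : ℤ => -(m + 1)) atBot atTop :=
    tendsto_neg_atBot_atTop.comp (tendsto_atBot_add_const_right _ 1 tendsto_id)
  have hlim := ((tendsto_inv_one_add_zpow_atTop hy).comp hrefl).const_sub 1
  rw [sub_self] at hlim
  refine hlim.congr fun m => ?_
  have h₁ := one_add_zpow_ne_zero hy (k := 4 * m + 2) (by omega)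
  have h₂ := one_add_zpow_ne_zero hy (k := 4 * -(m + 1) + 2) (by omega)
  have hinv : y ^ (4 * -(m + 1) + 2) * y ^ (4 * m + 2) = 1 := by
    rw [← zpow_add₀ hy₀, ← zpow_zero y]
    ring_nf
  rw [Function.comp_apply]
  field_simp
  linear_combination hinv

lemma hasSum_lambertTwoTerm_mul_shift (hy₀ : y ≠ 0) (hy : ‖y‖ < 1) {s : ℕ} (hs : s ≠ 0) :
    HasSum (fun m : ℤ => lambertTwoTerm y m * lambertTwoTerm y (m + s))
      (s * (y ^ (2 * s) / (1 - y ^ (4 * s)))) := by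
  have hg := summable_norm_lambertTwoTerm hy₀ hy
  have hconst : y ^ 2 / (1 - y ^ 4) ≠ 0 := div_ne_zero (pow_ne_zero 2 hy₀)
    (one_sub_ne_zero_of_norm_lt_one (norm_pow_lt_one hy four_ne_zero))
  have hdiff : Summable fun m : ℤ => (1 + y ^ (4 * (m + 1) + 2))⁻¹ - (1 + y ^ (4 * m + 2))⁻¹ := by
    rw [← summable_mul_left_iff hconst]
    have hinj : Function.Injective fun m : ℤ => (m, m + 1) := fun m n h => (Prod.mk.inj h).1
    refine ((summable_mul_of_summable_norm hg hg).comp_injective hinj).congr fun m => ?_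
    simpa using lambertTwoTerm_mul_shift hy₀ hy one_ne_zero m
  have htel := hasSum_int_telescope_shift (h := fun m : ℤ => (1 + y ^ (4 * m + 2))⁻¹) hdiff
    (tendsto_inv_one_add_zpow_atTop hy) (tendsto_inv_one_add_zpow_atBot hy₀ hy) s
  rw [sub_zero, mul_one] at htel
  rw [mul_comm]
  exact (htel.mul_left _).congr_fun fun m => lambertTwoTerm_mul_shift hy₀ hy hs m

lemma sq_tsum_int_eq {f : ℤ → ℂ} (hf : Summable fun m => ‖f m‖) :
    (∑' m, f m) ^ 2 = ∑' m, f m ^ 2 + 2 * ∑' s : ℕ, ∑' m, f m * f (m + (s + 1 : ℕ)) := by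
  let c : ℤ → ℂ := fun s => ∑' m, f m * f (m + s)
  have hneg (s : ℤ) : c (-s) = c s := by
    refine ((Equiv.addRight s).tsum_eq fun m => f m * f (m + -s)).symm.trans
      (tsum_congr fun m => ?_)
    simp [mul_comm]
  have hsum : HasSum (fun x : ℤ × ℤ => f x.2 * f (x.2 + x.1)) ((∑' m, f m) ^ 2) := by
    let e : ℤ × ℤ ≃ ℤ × ℤ := (Equiv.prodComm ℤ ℤ).trans (Equiv.prodShear (.refl ℤ) Equiv.addLeft)
    exact e.hasSum_iff.2 (hasSum_mul_self hf)
  have hc : Summable c := hsum.summable.prod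
  have hpos : Summable fun s : ℕ => c (s + 1) :=
    hc.comp_injective (i := fun s : ℕ => (s + 1 : ℤ)) fun a b h => by simpa using h
  have hsplit := tsum_of_add_one_of_neg_add_one hpos (by simpa only [hneg] using hpos)
  have htotal : (∑' m, f m) ^ 2 = ∑' s, c s := hsum.tsum_eq ▸ hsum.summable.tsum_prod
  have hzero : c 0 = ∑' m, f m ^ 2 := tsum_congr fun m => by rw [add_zero, sq]
  simp only [hneg] at hsplit
  rw [htotal, hsplit, hzero]
  push_cast
  ring

lemma summable_lambertDouble (hy : ‖y‖ < 1) :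
    Summable fun x : ℕ × ℕ => (x.1 : ℂ) * y ^ (x.1 * (2 * x.2 + 1)) := by
  have hinj : Function.Injective fun x : ℕ × ℕ => (x.1, 2 * x.2) := by
    rintro ⟨a, b⟩ ⟨c, d⟩ h
    simp only [Prod.mk.injEq] at h ⊢
    omega
  refine ((summable_norm_mul_pow_mul hy).of_norm.comp_injective hinj).congr fun x => ?_
  rfl

lemma hasSum_mul_pow_odd (hy : ‖y‖ < 1) {s : ℕ} (hs : s ≠ 0) :
    HasSum (fun m : ℕ => (s : ℂ) * y ^ (s * (2 * m + 1))) (s * (y ^ s / (1 - y ^ (2 * s)))) := by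
  have hgeom := hasSum_geometric_of_norm_lt_one (norm_pow_lt_one hy (mul_ne_zero two_ne_zero hs))
  rw [div_eq_mul_inv]
  exact ((hgeom.mul_left _).mul_left _).congr_fun fun m => by ring

lemma hasSum_neg_one_pow_mul_pow {x : ℂ} (hx : ‖x‖ < 1) :
    HasSum (fun n : ℕ => -((-1) ^ n * (n * x ^ n))) (x / (1 + x) ^ 2) := by
  have hsum := (hasSum_coe_mul_geometric_of_norm_lt_one (r := -x) (by rwa [norm_neg])).neg
  rw [neg_div, neg_neg, sub_neg_eq_add] at hsum
  exact hsum.congr_fun fun n => by rw [neg_pow]; ring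

lemma tsum_lambertDouble_shift (hy₀ : y ≠ 0) (hy : ‖y‖ < 1) :
    ∑' s : ℕ, ∑' m, lambertTwoTerm y m * lambertTwoTerm y (m + (s + 1 : ℕ)) =
      ∑' x : ℕ × ℕ, (x.1 : ℂ) * (y ^ 2) ^ (x.1 * (2 * x.2 + 1)) := by
  have hy2 := norm_pow_lt_one hy two_ne_zero
  have hsum := summable_lambertDouble hy2
  rw [hsum.tsum_prod, hsum.prod.tsum_eq_zero_add]
  simp only [Nat.cast_zero, zero_mul, tsum_zero, zero_add]
  refine tsum_congr fun s => ?_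
  rw [(hasSum_lambertTwoTerm_mul_shift hy₀ hy s.succ_ne_zero).tsum_eq,
    (hasSum_mul_pow_odd hy2 s.succ_ne_zero).tsum_eq]
  ring

lemma summable_neg_one_pow_mul {f : ℕ × ℕ → ℂ} (hf : Summable f) :
    Summable fun x : ℕ × ℕ => (-1) ^ x.1 * f x :=
  .of_norm (hf.norm.congr fun x => by simp)

lemma summable_lambertTwoTerm_sq (hy₀ : y ≠ 0) (hy : ‖y‖ < 1) :
    Summable fun m => lambertTwoTerm y m ^ 2 := by
  have hg := summable_norm_lambertTwoTerm hy₀ hy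
  refine ((summable_mul_of_summable_norm hg hg).comp_injective
    (i := fun m => (m, m)) fun m n h => (Prod.mk.inj h).1).congr fun m => ?_
  rw [Function.comp_apply, sq]

lemma hasSum_lambertTwoTerm_natCast_sq (hy : ‖y‖ < 1) (n : ℕ) :
    HasSum (fun k : ℕ => -((-1) ^ k * ((k : ℂ) * (y ^ 2) ^ (k * (2 * n + 1)))))
      (lambertTwoTerm y n ^ 2) := by
  have hx : ‖y ^ (4 * n + 2)‖ < 1 := norm_pow_lt_one hy (by omega)
  rw [lambertTwoTerm_natCast, div_pow, ← pow_mul,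
    show (2 * n + 1) * 2 = 4 * n + 2 by ring]
  exact (hasSum_neg_one_pow_mul_pow hx).congr_fun fun k => by ring

lemma tsum_prod_swap {f : ℕ × ℕ → ℂ} (hf : Summable f) :
    ∑' x, f x = ∑' n, ∑' k, f (k, n) := by
  rw [hf.tsum_prod]
  exact (Summable.tsum_comm (f := fun k n => f (k, n)) hf).symm

lemma tsum_lambertTwoTerm_sq (hy₀ : y ≠ 0) (hy : ‖y‖ < 1) :
    ∑' m, lambertTwoTerm y m ^ 2 =
      -2 * ∑' x : ℕ × ℕ, (-1) ^ x.1 * ((x.1 : ℂ) * (y ^ 2) ^ (x.1 * (2 * x.2 + 1))) := by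
  have hsum := summable_neg_one_pow_mul
    (summable_lambertDouble (norm_pow_lt_one hy two_ne_zero))
  rw [tsum_int_of_neg_add_one_eq (summable_lambertTwoTerm_sq hy₀ hy) fun m => by
      rw [lambertTwoTerm_neg_add_one hy₀ hy],
    tsum_prod_swap hsum, neg_mul, ← mul_neg, ← tsum_neg]
  refine congrArg (2 * ·) (tsum_congr fun n => ?_)
  rw [← (hasSum_lambertTwoTerm_natCast_sq hy n).tsum_eq, tsum_neg]

lemma hasSum_one_sub_neg_one_pow_mul (hy : ‖y‖ < 1) :
    HasSum (fun x : ℕ × ℕ => (1 - (-1) ^ x.1) * ((x.1 : ℂ) * y ^ (x.1 * (2 * x.2 + 1))))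
      (2 * lambertFour y) := by
  have hinj : Function.Injective fun x : ℕ × ℕ => (2 * x.1 + 1, x.2) := by
    rintro ⟨a, b⟩ ⟨c, d⟩ h
    simp only [Prod.mk.injEq] at h ⊢
    omega
  refine (hinj.hasSum_iff fun x hx => ?_).1 ?_
  · have heven : Even x.1 := by
      by_contra hodd
      obtain ⟨k, hk⟩ := Nat.not_even_iff_odd.1 hodd
      exact hx ⟨(k, x.2), by simp [← hk]⟩
    rw [heven.neg_one_pow, sub_self, zero_mul]
  · refine ((hasSum_lambertFour hy).mul_left 2).congr_fun fun x => ?_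
    rw [Function.comp_apply, (odd_two_mul_add_one x.1).neg_one_pow]
    push_cast
    ring

lemma lambertTwo_sq (hy₀ : y ≠ 0) (hy : ‖y‖ < 1) : lambertTwo y ^ 2 = lambertFour (y ^ 2) := by
  have hy2 := norm_pow_lt_one hy two_ne_zero
  have hsum := summable_lambertDouble hy2
  have hsq := sq_tsum_int_eq (summable_norm_lambertTwoTerm hy₀ hy)
  have hdiff := (hsum.hasSum.sub (summable_neg_one_pow_mul hsum).hasSum).unique
    ((hasSum_one_sub_neg_one_pow_mul hy2).congr_fun fun x => by ring)
  rw [tsum_lambertTwoTerm hy₀ hy, tsum_lambertTwoTerm_sq hy₀ hy,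
    tsum_lambertDouble_shift hy₀ hy] at hsq
  linear_combination (hsq + 2 * hdiff) / 4

lemma lambertFour_eq (hy₀ : y ≠ 0) (hy : ‖y‖ < 1) : lambertFour y = y * gaussPsi (y ^ 2) ^ 4 := by
  obtain ⟨x, rfl⟩ := IsAlgClosed.exists_pow_nat_eq y two_pos
  have hx : ‖x‖ < 1 := by
    rwa [norm_pow, pow_lt_one_iff_of_nonneg (norm_nonneg x) two_ne_zero] at hy
  rw [← lambertTwo_sq ((pow_ne_zero_iff two_ne_zero).1 hy₀) hx, lambertTwo_eq hx, mul_pow,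
    ← pow_mul x 2 2, ← pow_mul]

lemma lambertFour_eq_theta3_sq_mul (hy₀ : y ≠ 0) (hy : ‖y‖ < 1) :
    lambertFour y = theta3 (y ^ 2) ^ 2 * lambertTwo y := by
  have hψ := gaussPsi_sq (pow_ne_zero 2 hy₀) (norm_pow_lt_one hy two_ne_zero)
  rw [lambertFour_eq hy₀ hy, lambertTwo_eq hy, show 4 = 2 * 2 from rfl, pow_mul, hψ, ← pow_mul]
  ring

end LambertFour

/-- The weight two Eisenstein series `1 + 24 ∑ σ_odd(n) yⁿ`, as a double series over an odd divisor
and its cofactor. -/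
def eisensteinOdd (y : ℂ) : ℂ :=
  1 + 24 * ∑' x : ℕ × ℕ, (2 * (x.1 : ℂ) + 1) * y ^ ((2 * x.1 + 1) * (x.2 + 1))

section EisensteinOdd

variable {y : ℂ}

lemma tsum_prod_even_add_odd {f : ℕ × ℕ → ℂ} (hf : Summable f) :
    ∑' x, f x = ∑' x : ℕ × ℕ, f (x.1, 2 * x.2) + ∑' x : ℕ × ℕ, f (x.1, 2 * x.2 + 1) := by
  have heven : Summable fun x : ℕ × ℕ => f (x.1, 2 * x.2) :=
    hf.comp_injective (i := fun x : ℕ × ℕ => (x.1, 2 * x.2)) fun x z h => by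
      simp only [Prod.mk.injEq] at h
      ext <;> omega
  have hodd : Summable fun x : ℕ × ℕ => f (x.1, 2 * x.2 + 1) :=
    hf.comp_injective (i := fun x : ℕ × ℕ => (x.1, 2 * x.2 + 1)) fun x z h => by
      simp only [Prod.mk.injEq] at h
      ext <;> omega
  have hsplit : ∀ a, ∑' b, f (a, b) = ∑' b, f (a, 2 * b) + ∑' b, f (a, 2 * b + 1) := fun a =>
    (tsum_even_add_odd (f := fun b => f (a, b)) (heven.prod_factor a) (hodd.prod_factor a)).symm
  rw [hf.tsum_prod, heven.tsum_prod, hodd.tsum_prod, tsum_congr hsplit]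
  exact heven.prod.tsum_add hodd.prod

lemma eisensteinOdd_eq_add_lambertFour (hy : ‖y‖ < 1) :
    eisensteinOdd y = eisensteinOdd (y ^ 2) + 24 * lambertFour y := by
  rw [eisensteinOdd, eisensteinOdd, tsum_prod_even_add_odd (summable_norm_eisensteinOdd hy).of_norm,
    ← lambertFour]
  have hsq : ∀ x : ℕ × ℕ, (2 * (x.1 : ℂ) + 1) * (y ^ 2) ^ ((2 * x.1 + 1) * (x.2 + 1)) =
      (2 * (x.1 : ℂ) + 1) * y ^ ((2 * x.1 + 1) * (2 * x.2 + 1 + 1)) := fun x => by ring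
  rw [tsum_congr hsq]
  ring

lemma theta3_pow_four_add_lambertFour (hy₀ : y ≠ 0) (hy : ‖y‖ < 1) :
    theta3 y ^ 4 + 16 * lambertFour y =
      theta3 (y ^ 2) ^ 4 + 16 * lambertFour (y ^ 2) + 24 * lambertFour y := by
  rw [← lambertTwo_sq hy₀ hy, lambertFour_eq_theta3_sq_mul hy₀ hy]
  linear_combination
    (theta3 y ^ 2 + theta3 (y ^ 2) ^ 2 + 4 * lambertTwo y) * theta3_sq_eq_add_lambertTwo hy₀ hy

lemma tendsto_tsum_mul_pow_two_pow {ι : Type*} {f : ι → ℂ} {e : ι → ℕ} (hy : ‖y‖ < 1)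
    (hf : Summable fun i => ‖f i * y ^ e i‖) :
    Tendsto (fun k : ℕ => ∑' i, f i * (y ^ 2 ^ k) ^ e i) atTop (𝓝 (∑' i, f i * 0 ^ e i)) := by
  have hzero : Tendsto (fun k : ℕ => y ^ 2 ^ k) atTop (𝓝 0) :=
    (tendsto_pow_atTop_nhds_zero_of_norm_lt_one hy).comp
      (tendsto_pow_atTop_atTop_of_one_lt one_lt_two)
  refine tendsto_tsum_of_dominated_convergence hf
    (fun i => (hzero.pow (e i)).const_mul (f i)) (.of_forall fun k i => ?_)
  rw [norm_mul, norm_mul, norm_pow, norm_pow, norm_pow]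
  gcongr
  exact pow_le_of_le_one (norm_nonneg y) hy.le (pow_ne_zero k two_ne_zero)

lemma tendsto_theta3_pow_two_pow (hy₀ : y ≠ 0) (hy : ‖y‖ < 1) :
    Tendsto (fun k : ℕ => theta3 (y ^ 2 ^ k)) atTop (𝓝 1) := by
  have hpow : ∀ (x : ℂ) (n : ℤ), x ^ n ^ 2 = 1 * x ^ n.natAbs ^ 2 := fun x n => by
    rw [one_mul, ← zpow_natCast, Nat.cast_pow, Int.natCast_natAbs, sq_abs]
  have hlim := tendsto_tsum_mul_pow_two_pow (f := fun _ : ℤ => 1) (e := fun n => n.natAbs ^ 2) hy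
    (by simpa only [hpow] using summable_norm_theta3 hy₀ hy)
  rw [tsum_eq_single 0 fun n hn => by simp [hn]] at hlim
  simpa only [theta3, hpow, Int.natAbs_zero, zero_pow two_ne_zero, pow_zero, mul_one] using hlim

lemma tendsto_lambertFour_pow_two_pow (hy : ‖y‖ < 1) :
    Tendsto (fun k : ℕ => lambertFour (y ^ 2 ^ k)) atTop (𝓝 0) := by
  simpa [lambertFour] using tendsto_tsum_mul_pow_two_pow hy (hasSum_lambertFour hy).summable.norm

lemma tendsto_eisensteinOdd_pow_two_pow (hy : ‖y‖ < 1) :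
    Tendsto (fun k : ℕ => eisensteinOdd (y ^ 2 ^ k)) atTop (𝓝 1) := by
  simpa [eisensteinOdd] using
    ((tendsto_tsum_mul_pow_two_pow hy (summable_norm_eisensteinOdd hy)).const_mul 24).const_add 1

/-- Both sides satisfy `g y = g (y²) + 24 λ(y)` with `λ = lambertFour`, and agree at `y = 0`. -/
lemma eisensteinOdd_eq_theta3_pow_four_add (hy₀ : y ≠ 0) (hy : ‖y‖ < 1) :
    eisensteinOdd y = theta3 y ^ 4 + 16 * lambertFour y := by
  let g : ℂ → ℂ := fun z => eisensteinOdd z - (theta3 z ^ 4 + 16 * lambertFour z)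
  have hconst : ∀ k : ℕ, g (y ^ 2 ^ k) = g y := fun k => by
    induction k with
    | zero => rw [pow_zero, pow_one]
    | succ k ih =>
      have hk := norm_pow_lt_one hy (pow_ne_zero k two_ne_zero)
      rw [← ih, pow_succ, pow_mul]
      linear_combination theta3_pow_four_add_lambertFour (pow_ne_zero _ hy₀) hk -
        eisensteinOdd_eq_add_lambertFour hk
  have hlim : Tendsto (fun k : ℕ => g (y ^ 2 ^ k)) atTop (𝓝 (1 - (1 ^ 4 + 16 * 0))) :=
    (tendsto_eisensteinOdd_pow_two_pow hy).sub
      (((tendsto_theta3_pow_two_pow hy₀ hy).pow 4).add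
        ((tendsto_lambertFour_pow_two_pow hy).const_mul 16))
  simp only [hconst] at hlim
  have hzero : g y = 1 - (1 ^ 4 + 16 * 0) := tendsto_nhds_unique tendsto_const_nhds hlim
  linear_combination hzero

lemma sum_divisorsAntidiagonal_odd (y : ℂ) (n : ℕ) :
    ∑ p ∈ n.divisorsAntidiagonal, (if Odd p.1 then (p.1 : ℂ) * y ^ (p.1 * p.2) else 0) =
      sigmaOdd n * y ^ n := by
  rw [Nat.sum_divisorsAntidiagonal fun a b => if Odd a then (a : ℂ) * y ^ (a * b) else 0,
    sigmaOdd, Nat.cast_sum, sum_mul, sum_filter]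
  refine sum_congr rfl fun d hd => ?_
  rw [Nat.mul_div_cancel' (Nat.dvd_of_mem_divisors hd)]

lemma hasSum_odd_divisor_mul_pow (hy : ‖y‖ < 1) :
    HasSum (fun p : ℕ+ × ℕ+ => if Odd (p.1 : ℕ) then (p.1 : ℂ) * y ^ (p.1 * p.2 : ℕ) else 0)
      (∑' x : ℕ × ℕ, (2 * (x.1 : ℂ) + 1) * y ^ ((2 * x.1 + 1) * (x.2 + 1))) := by
  have hinj : Function.Injective fun x : ℕ × ℕ => ((2 * x.1).succPNat, x.2.succPNat) := by
    rintro ⟨a, b⟩ ⟨c, d⟩ h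
    simp only [Prod.mk.injEq, Nat.succPNat_inj] at h ⊢
    omega
  refine (hinj.hasSum_iff fun p hp => if_neg ?_).1 ?_
  · rintro ⟨k, hk⟩
    refine hp ⟨(k, p.2.natPred), ?_⟩
    exact Prod.ext (PNat.coe_injective (by simp [hk])) p.2.succPNat_natPred
  · refine (summable_norm_eisensteinOdd hy).of_norm.hasSum.congr_fun fun x => ?_
    simp

lemma eisensteinOdd_eq_tsum_sigmaOdd (hy : ‖y‖ < 1) :
    eisensteinOdd y = 1 + 24 * ∑' n : ℕ, (sigmaOdd (n + 1) : ℂ) * y ^ (n + 1) := by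
  have hsigma := (sigmaAntidiagonalEquivProd.hasSum_iff.2 (hasSum_odd_divisor_mul_pow hy)).sigma
    (g := fun n : ℕ+ => (sigmaOdd n : ℂ) * y ^ (n : ℕ)) fun n => ?_
  · rw [eisensteinOdd, ← hsigma.tsum_eq,
      tsum_pnat_eq_tsum_succ (f := fun n : ℕ => (sigmaOdd n : ℂ) * y ^ n)]
  · rw [← sum_divisorsAntidiagonal_odd, ← sum_coe_sort]
    exact hasSum_fintype _

end EisensteinOdd

section Bailey

lemma hasSum_sum_antidiagonal {f : ℕ × ℕ → ℂ} (hf : Summable f) :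
    HasSum (fun n => ∑ x ∈ antidiagonal n, f x) (∑' x, f x) := by
  refine (HasAntidiagonal.sigmaAntidiagonalEquivProd.hasSum_iff.2 hf.hasSum).sigma
    (g := fun n => ∑ x ∈ antidiagonal n, f x) fun n => ?_
  rw [← sum_coe_sort]
  exact hasSum_fintype _

variable {q ρ x : ℂ} {α : ℕ → ℂ}

lemma qPoch_add (x a q : ℂ) (m n : ℕ) :
    qPoch x a q (m + n) = qPoch x a q m * qPoch x (a * q ^ m) q n := by
  simp only [qPoch, prod_range_add, pow_add, mul_assoc]

lemma norm_qPoch_zero_le (hq : ‖q‖ ≤ 1) (x : ℂ) (n : ℕ) : ‖qPoch 0 x q n‖ ≤ ‖x‖ ^ n := by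
  rw [qPoch, norm_prod]
  refine (prod_le_prod (fun _ _ => norm_nonneg _) fun k _ => ?_).trans_eq
    (by rw [prod_const, card_range])
  rw [zero_sub, norm_neg, norm_mul, norm_pow]
  exact mul_le_of_le_one_right (norm_nonneg x) (pow_le_one₀ (norm_nonneg q) hq)

/-- The double series obtained by inserting a Bailey pair, written with
`1 / (q; q)_m = (q^(m+1); q)_∞ / (q; q)_∞` to clear denominators, into a sum weighted by
`(ρ; q)_n (-x)^n q^(n(n-1)/2)`; the second index is `n - r`. -/
def baileySummand (α : ℕ → ℂ) (ρ x q : ℂ) (i : ℕ × ℕ) : ℂ :=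
  qPoch 1 ρ q (i.1 + i.2) * qPoch 0 x q (i.1 + i.2) *
    (α i.1 * (qPochInf (q * q ^ i.2) q * qPochInf (ρ * x * q ^ (2 * i.1 + i.2)) q))

lemma summable_baileySummand (hq : ‖q‖ < 1) (hρ : ‖ρ‖ < 1) (hx : ‖x‖ < 1)
    (hα : ∃ C, ∀ n, ‖α n‖ ≤ C) : Summable (baileySummand α ρ x q) := by
  obtain ⟨C, hC⟩ := hα
  obtain ⟨C₁, hC₁⟩ := exists_norm_qPoch_le ρ hq
  obtain ⟨C₂, hC₂⟩ := exists_norm_qPochInf_mul_pow_le hq hq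
  have hρx : ‖ρ * x‖ < 1 := by
    rw [norm_mul]
    exact mul_lt_one_of_nonneg_of_lt_one_left (norm_nonneg ρ) hρ hx.le
  obtain ⟨C₃, hC₃⟩ := exists_norm_qPochInf_mul_pow_le hq hρx
  have hgeom := summable_geometric_of_lt_one (norm_nonneg x) hx
  refine .of_norm_bounded ((hgeom.mul_of_nonneg hgeom (fun _ => pow_nonneg (norm_nonneg x) _)
    fun _ => pow_nonneg (norm_nonneg x) _).mul_left (C₁ * (C * (C₂ * C₃)))) fun ⟨r, m⟩ => ?_
  have h₁ := (norm_nonneg _).trans (hC₁ 0)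
  have h₂ := (norm_nonneg _).trans (hC₂ 0)
  have h₃ := (norm_nonneg _).trans (hC 0)
  simp only [baileySummand, norm_mul]
  calc _ ≤ C₁ * ‖x‖ ^ (r + m) * (C * (C₂ * C₃)) := by
        gcongr
        exacts [hC₁ _, norm_qPoch_zero_le hq.le x _, hC r, hC₂ m, hC₃ _]
    _ = _ := by rw [pow_add]; ring

lemma tsum_baileySummand_right (hq : ‖q‖ < 1) (hρ : ‖ρ‖ < 1) (r : ℕ) :
    ∑' m, baileySummand α ρ x q (r, m) =
      qPochInf q q * (qPoch 1 ρ q r * qPoch 0 x q r * qPochInf (x * q ^ r) q * α r) := by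
  have hρr := norm_mul_pow_lt_one hq hρ r
  have hterm : ∀ m, baileySummand α ρ x q (r, m) =
      qPochInf q q * qPoch 1 ρ q r * qPoch 0 x q r * α r * qPochInf (ρ * q ^ r) q *
        (qPoch 0 (x * q ^ r) q m / qPoch 1 q q m *
          (qPochInf (ρ * q ^ r * (x * q ^ r) * q ^ m) q / qPochInf (ρ * q ^ r * q ^ m) q)) :=
    fun m => by
      have hne := qPoch_one_ne_zero hq hq m
      have hne' := qPochInf_ne_zero hq (norm_mul_pow_lt_one hq hρr m)
      rw [baileySummand, qPoch_add, qPoch_add, qPochInf_eq_qPoch_mul (ρ * q ^ r) hq m,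
        qPochInf_eq_qPoch_mul q hq m,
        show ρ * x * q ^ (2 * r + m) = ρ * q ^ r * (x * q ^ r) * q ^ m by ring]
      field_simp
  have hne := qPochInf_ne_zero hq hρr
  rw [tsum_congr hterm, tsum_mul_left, tsum_qGauss_limit hq hρr]
  field_simp

/-- The limiting case of Bailey's lemma in which one of its two free parameters is infinite. -/
lemma bailey_lemma (hq : ‖q‖ < 1) (hρ : ‖ρ‖ < 1) (hx : ‖x‖ < 1) (hα : ∃ C, ∀ n, ‖α n‖ ≤ C) :
    ∑' n, qPoch 1 ρ q n * qPoch 0 x q n * ∑ i ∈ antidiagonal n,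
        α i.1 * (qPochInf (q * q ^ i.2) q * qPochInf (ρ * x * q ^ (2 * i.1 + i.2)) q) =
      qPochInf q q * ∑' r, qPoch 1 ρ q r * qPoch 0 x q r * qPochInf (x * q ^ r) q * α r := by
  have hsum := summable_baileySummand hq hρ hx hα
  rw [← tsum_mul_left, ← tsum_congr (tsum_baileySummand_right hq hρ), ← hsum.tsum_prod,
    ← (hasSum_sum_antidiagonal hsum).tsum_eq]
  refine tsum_congr fun n => ?_
  rw [mul_sum]
  refine sum_congr rfl fun i hi => ?_
  rw [baileySummand, mem_antidiagonal.1 hi]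

/-- The tail `(q^(k+1); q)_∞` of `(q; q)_∞`. It stands for `(q; q)_∞ / (q; q)_k`, and vanishes for
negative `k` as that quotient should. -/
def qPochTail (q : ℂ) (k : ℤ) : ℂ := qPochInf (q ^ (k + 1)) q

lemma qPochTail_natCast (q : ℂ) (n : ℕ) : qPochTail q n = qPochInf (q * q ^ n) q := by
  rw [qPochTail, ← pow_succ']
  norm_cast

lemma qPochTail_of_neg (hq₀ : q ≠ 0) {k : ℤ} (hk : k < 0) : qPochTail q k = 0 :=
  qPochInf_zpow_of_nonpos hq₀ hk

lemma qPochTail_sub_one (hq₀ : q ≠ 0) (hq : ‖q‖ < 1) (k : ℤ) :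
    qPochTail q (k - 1) = (1 - q ^ k) * qPochTail q k := by
  rw [qPochTail, qPochTail, sub_add_cancel, qPochInf_eq_one_sub_mul _ hq, zpow_add_one₀ hq₀]

end Bailey

section BaileyPair

variable {p Q : ℂ}

lemma zpow_natCast_add_natCast_add_one (hp₀ : p ≠ 0) (n r : ℕ) :
    p ^ ((n : ℤ) + r + 1) = p ^ n * p ^ r * p := by
  rw [zpow_add_one₀ hp₀, zpow_add₀ hp₀, zpow_natCast, zpow_natCast]

lemma sum_qPochTail_telescope (hQp : Q ^ 2 = p) (hp₀ : p ≠ 0) (hp : ‖p‖ < 1) {n : ℕ} (hn : n ≠ 0)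
    (R : ℕ) :
    ∑ r ∈ range (R + 1), (-1) ^ r * Q ^ (r * (r + 1)) *
        (p ^ ((n : ℤ) - r) - p ^ ((n : ℤ) + r + 1)) *
          (qPochTail p (n - r) * qPochTail p (n + r + 1)) =
      (-1) ^ R * Q ^ (R * (R + 1)) * p ^ n * (1 - p ^ (R + 1)) / (1 - p ^ n) *
        (qPochTail p (n - R - 1) * qPochTail p (n + R + 1)) := by
  have hX : 1 - p ^ n ≠ 0 := one_sub_ne_zero_of_norm_lt_one (norm_pow_lt_one hp hn)
  induction R with
  | zero =>
    have hrec := qPochTail_sub_one hp₀ hp n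
    rw [zpow_natCast] at hrec
    simp only [zero_add, sum_range_one, Nat.cast_zero, sub_zero, add_zero, hrec, zpow_natCast,
      zpow_add_one₀ hp₀]
    field_simp
  | succ R ih =>
    have hrec₁ := qPochTail_sub_one hp₀ hp (n - (R + 1 : ℕ))
    have hrec₂ := qPochTail_sub_one hp₀ hp (n + (R + 1 : ℕ) + 1)
    have hQ : Q ^ ((R + 1) * (R + 1 + 1)) = Q ^ (R * (R + 1)) * p ^ (R + 1) := by
      rw [← hQp, ← pow_mul, ← pow_add]
      ring_nf
    have hZ : p ^ (R + 1) ≠ 0 := pow_ne_zero _ hp₀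
    rw [add_sub_cancel_right] at hrec₂
    rw [sum_range_succ, ih, show (n : ℤ) + R + 1 = n + (R + 1 : ℕ) by push_cast; ring,
      show (n : ℤ) - R - 1 = n - (R + 1 : ℕ) by push_cast; ring, hrec₁, hrec₂,
      zpow_natCast_sub_natCast₀ hp₀, zpow_natCast_add_natCast_add_one hp₀, hQ, pow_succ (-1) R,
      pow_succ p (R + 1)]
    field_simp
    ring

/-- The sequence `α` of the Bailey pair, relative to `Q²` and with base `Q²`, whose `β` is
`1 / (-Q; Q²)²_{n+1}`. -/
def mockAlpha (Q : ℂ) (r : ℕ) : ℂ :=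
  (-1) ^ r * Q ^ (r * (r + 1)) * (1 - (Q ^ 2) ^ (2 * r + 1)) / (1 + Q * (Q ^ 2) ^ r) ^ 2

/-- `(Q²; Q²)²_∞` times the sequence `β` of the Bailey pair with `α` given by `mockAlpha`. -/
def mockBeta (Q : ℂ) (n : ℕ) : ℂ :=
  ∑ r ∈ range (n + 1), mockAlpha Q r * (qPochTail (Q ^ 2) (n - r) * qPochTail (Q ^ 2) (n + r + 1))

lemma mockBeta_succ (hQ₀ : Q ≠ 0) (hQ : ‖Q‖ < 1) (n : ℕ) :
    (1 + Q * (Q ^ 2) ^ (n + 1)) ^ 2 * mockBeta Q (n + 1) = mockBeta Q n := by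
  obtain ⟨p, hQp⟩ : ∃ p, Q ^ 2 = p := ⟨_, rfl⟩
  have hp₀ : p ≠ 0 := hQp ▸ pow_ne_zero 2 hQ₀
  have hp : ‖p‖ < 1 := hQp ▸ norm_pow_lt_one hQ two_ne_zero
  have hextend : mockBeta Q n = ∑ r ∈ range (n + 1 + 1),
      mockAlpha Q r * (qPochTail p (n - r) * qPochTail p (n + r + 1)) := by
    rw [sum_range_succ, qPochTail_of_neg hp₀ (by push_cast; omega), mockBeta, hQp]
    ring
  have htel := sum_qPochTail_telescope hQp hp₀ hp (n := n + 1) n.succ_ne_zero (n + 1)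
  rw [qPochTail_of_neg hp₀ (by omega), zero_mul, mul_zero] at htel
  rw [hextend, ← sub_eq_zero, mockBeta, mul_sum, ← sum_sub_distrib, ← htel, hQp]
  refine sum_congr rfl fun r _ => ?_
  have hrec₁ := qPochTail_sub_one hp₀ hp ((n + 1 : ℕ) - r)
  have hrec₂ := qPochTail_sub_one hp₀ hp ((n + 1 : ℕ) + r + 1)
  have hr : 1 + Q * p ^ r ≠ 0 :=
    one_add_ne_zero_of_norm_lt_one (norm_mul_pow_lt_one hp hQ r)
  have hZ : p ^ r ≠ 0 := pow_ne_zero _ hp₀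
  rw [add_sub_cancel_right, show ((n + 1 : ℕ) : ℤ) + r = n + r + 1 by push_cast; ring] at hrec₂
  rw [show ((n + 1 : ℕ) : ℤ) - r - 1 = n - r by push_cast; ring] at hrec₁
  rw [hrec₁, hrec₂, mockAlpha, hQp, zpow_natCast_sub_natCast₀ hp₀,
    show (n : ℤ) + r + 1 + 1 = (n + 1 : ℕ) + r + 1 by push_cast; ring,
    zpow_natCast_add_natCast_add_one hp₀, ← hQp]
  rw [← hQp] at hr hZ
  field_simp
  ring

lemma mockBeta_eq (hQ₀ : Q ≠ 0) (hQ : ‖Q‖ < 1) (n : ℕ) :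
    mockBeta Q n = qPochInf (Q ^ 2) (Q ^ 2) ^ 2 / qPoch 1 (-Q) (Q ^ 2) (n + 1) ^ 2 := by
  have hp := norm_pow_lt_one hQ two_ne_zero
  have hne : ∀ k, 1 + Q * (Q ^ 2) ^ k ≠ 0 := fun k =>
    one_add_ne_zero_of_norm_lt_one (norm_mul_pow_lt_one hp hQ k)
  have hfac : ∀ k, qPoch 1 (-Q) (Q ^ 2) (k + 1) =
      qPoch 1 (-Q) (Q ^ 2) k * (1 + Q * (Q ^ 2) ^ k) := fun k => by
    rw [qPoch_succ, neg_mul, sub_neg_eq_add]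
  induction n with
  | zero =>
    have htail := qPochTail_sub_one (pow_ne_zero 2 hQ₀) hp 1
    have hne₀ := hne 0
    rw [sub_self, zpow_one] at htail
    have htail₀ : qPochTail (Q ^ 2) 0 = qPochInf (Q ^ 2) (Q ^ 2) := by
      rw [qPochTail, zero_add, zpow_one]
    rw [mockBeta, hfac, sum_range_one, mockAlpha, ← htail₀]
    simp only [Nat.cast_zero, sub_zero, zero_add, mul_zero, pow_zero, mul_one, one_mul, pow_one,
      qPoch_zero, htail] at hne₀ ⊢
    field_simp
  | succ n ih =>
    have hrec := mockBeta_succ hQ₀ hQ n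
    rw [ih, mul_comm, ← eq_div_iff (pow_ne_zero 2 (hne (n + 1)))] at hrec
    rw [hrec, hfac (n + 1), mul_pow, div_div]

lemma exists_norm_mockAlpha_le (hQ : ‖Q‖ < 1) : ∃ C, ∀ n, ‖mockAlpha Q n‖ ≤ C := by
  refine ⟨2 * ((1 - ‖Q‖)⁻¹) ^ 2, fun n => ?_⟩
  have hnum : ‖1 - (Q ^ 2) ^ (2 * n + 1)‖ ≤ 2 := by
    have hp := norm_pow_lt_one (norm_pow_lt_one hQ two_ne_zero) (2 * n).succ_ne_zero
    linarith [norm_sub_le 1 ((Q ^ 2) ^ (2 * n + 1)), norm_one (α := ℂ)]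
  have hden := norm_inv_one_add_pow_le hQ (2 * n).succ_ne_zero
  rw [mockAlpha, show Q * (Q ^ 2) ^ n = Q ^ (2 * n + 1) by ring, div_eq_mul_inv, ← inv_pow,
    norm_mul, norm_mul, norm_mul, norm_pow, norm_neg, norm_one, one_pow, one_mul, norm_pow,
    norm_pow]
  gcongr
  exact (mul_le_of_le_one_left (norm_nonneg _) (pow_le_one₀ (norm_nonneg Q) hQ.le)).trans hnum

lemma sum_antidiagonal_mockAlpha (Q : ℂ) (n : ℕ) :
    ∑ i ∈ antidiagonal n, mockAlpha Q i.1 * (qPochInf (Q ^ 2 * (Q ^ 2) ^ i.2) (Q ^ 2) *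
      qPochInf (Q * Q ^ 3 * (Q ^ 2) ^ (2 * i.1 + i.2)) (Q ^ 2)) = mockBeta Q n := by
  rw [mockBeta, ← Nat.sum_antidiagonal_eq_sum_range_succ_mk fun i : ℕ × ℕ => mockAlpha Q i.1 *
    (qPochTail (Q ^ 2) (n - i.1) * qPochTail (Q ^ 2) (n + i.1 + 1))]
  refine sum_congr rfl fun i hi => ?_
  rw [← mem_antidiagonal.1 hi, show ((i.1 + i.2 : ℕ) : ℤ) - i.1 = i.2 by push_cast; ring,
    show ((i.1 + i.2 : ℕ) : ℤ) + i.1 + 1 = (i.1 + i.2 + i.1 + 1 : ℕ) by push_cast; ring,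
    qPochTail_natCast, qPochTail_natCast]
  ring_nf

/-- The mock theta series `∑ (-1)^(n+1) Q^((n+1)²) (Q; Q²)_n / (-Q; Q²)²_{n+1}`. -/
def mockSeries (Q : ℂ) : ℂ :=
  ∑' n : ℕ, (-1) ^ (n + 1) * Q ^ (n + 1) ^ 2 * qPoch 1 Q (Q ^ 2) n /
    qPoch 1 (-Q) (Q ^ 2) (n + 1) ^ 2

/-- The Appell–Lerch sum `∑ Q^((n+1)(2n+1)) / (1 + Q^(2n+1))`. -/
def appellSum (Q : ℂ) : ℂ :=
  ∑' n : ℕ, Q ^ ((n + 1) * (2 * n + 1)) / (1 + Q ^ (2 * n + 1))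

lemma qPoch_zero_cube (Q : ℂ) (n : ℕ) :
    qPoch 0 (Q ^ 3) (Q ^ 2) n = (-1) ^ n * Q ^ (n * (n + 2)) := by
  rw [show Q ^ 3 = -(-Q ^ 2 * Q) by ring, qPoch_zero_neg_mul_sq, neg_pow]
  ring

lemma mul_tsum_mockBeta (hQ₀ : Q ≠ 0) (hQ : ‖Q‖ < 1) :
    Q * ∑' n, qPoch 1 Q (Q ^ 2) n * qPoch 0 (Q ^ 3) (Q ^ 2) n * mockBeta Q n =
      -(qPochInf (Q ^ 2) (Q ^ 2) ^ 2 * mockSeries Q) := by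
  rw [mockSeries, ← tsum_mul_left, ← tsum_mul_left, ← tsum_neg]
  refine tsum_congr fun n => ?_
  rw [mockBeta_eq hQ₀ hQ, qPoch_zero_cube]
  ring

lemma mul_tsum_mockAlpha (hQ : ‖Q‖ < 1) :
    Q * ∑' r, qPoch 1 Q (Q ^ 2) r * qPoch 0 (Q ^ 3) (Q ^ 2) r *
        qPochInf (Q ^ 3 * (Q ^ 2) ^ r) (Q ^ 2) * mockAlpha Q r =
      qPochInf Q (Q ^ 2) * appellSum Q := by
  rw [appellSum, ← tsum_mul_left, ← tsum_mul_left]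
  refine tsum_congr fun r => ?_
  have hp := norm_pow_lt_one hQ two_ne_zero
  have hpow := norm_pow_lt_one hQ (2 * r).succ_ne_zero
  have hsub := one_sub_ne_zero_of_norm_lt_one hpow
  have hadd := one_add_ne_zero_of_norm_lt_one hpow
  rw [qPochInf_eq_qPoch_mul Q hp r, qPochInf_eq_one_sub_mul (Q * _) hp, qPoch_zero_cube, mockAlpha,
    show Q ^ 3 * (Q ^ 2) ^ r = Q * (Q ^ 2) ^ r * Q ^ 2 by ring,
    show Q * (Q ^ 2) ^ r = Q ^ (2 * r + 1) by ring,
    show 1 - (Q ^ 2) ^ (2 * r + 1) = (1 - Q ^ (2 * r + 1)) * (1 + Q ^ (2 * r + 1)) by ring]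
  rcases neg_one_pow_eq_or ℂ r with hsign | hsign
  all_goals
    rw [hsign]
    field_simp
    ring

lemma mockSeries_mul_gaussPsi (hQ₀ : Q ≠ 0) (hQ : ‖Q‖ < 1) :
    mockSeries Q * gaussPsi Q = -appellSum Q := by
  have hp := norm_pow_lt_one hQ two_ne_zero
  have hbailey := bailey_lemma hp hQ (norm_pow_lt_one hQ three_ne_zero)
    (exists_norm_mockAlpha_le hQ)
  simp only [sum_antidiagonal_mockAlpha] at hbailey
  have hmain := congrArg (Q * ·) hbailey
  simp only [mul_left_comm Q (qPochInf _ _), mul_tsum_mockBeta hQ₀ hQ, mul_tsum_mockAlpha hQ]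
    at hmain
  rw [gaussPsi, ← mul_div_assoc, div_eq_iff (qPochInf_ne_zero hp hQ)]
  refine mul_left_cancel₀ (qPochInf_ne_zero hp hp) ?_
  linear_combination -hmain

end BaileyPair

section IndefiniteTheta

variable {y : ℂ}

/-- The indefinite theta series `∑ (-1)^(a+b) y^(a² - b² - b)` over `0 ≤ b < a`, with
`a = b + 1 + j`. -/
def indefTheta (y : ℂ) : ℂ :=
  ∑' (b : ℕ) (j : ℕ), (-1) ^ (j + 1) * y ^ ((j + 1) ^ 2 + b * (2 * j + 1))

lemma summable_indefTheta (hy : ‖y‖ < 1) : Summable fun x : ℕ × ℕ =>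
    (-1 : ℂ) ^ (x.2 + 1) * y ^ ((x.2 + 1) ^ 2 + x.1 * (2 * x.2 + 1)) := by
  have hgeom := summable_geometric_of_lt_one (norm_nonneg y) hy
  refine .of_norm_bounded (hgeom.mul_of_nonneg hgeom (fun _ => pow_nonneg (norm_nonneg y) _)
    fun _ => pow_nonneg (norm_nonneg y) _) fun x => ?_
  rw [norm_mul, norm_pow, norm_neg, norm_one, one_pow, one_mul, norm_pow, ← pow_add]
  exact pow_le_pow_of_le_one (norm_nonneg y) hy.le (by nlinarith)

/-- The finite theta series which multiplies `(-1)^a y^a²` in `indefTheta`. -/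
def partialTheta (y : ℂ) (a : ℕ) : ℂ := ∑ j ∈ range a, (-1) ^ j * y ^ (-((j : ℤ) ^ 2 + j))

lemma hasSum_indefTheta (hy₀ : y ≠ 0) (hy : ‖y‖ < 1) :
    HasSum (fun a : ℕ => (-1) ^ a * y ^ a ^ 2 * partialTheta y a) (indefTheta y) := by
  have hsum := summable_indefTheta hy
  rw [← hasSum_nat_add_iff' 1, indefTheta, ← hsum.tsum_prod, sum_range_one, partialTheta,
    range_zero, sum_empty, mul_zero, sub_zero]
  refine (hasSum_sum_antidiagonal hsum).congr_fun fun n => ?_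
  rw [partialTheta, ← Nat.sum_antidiagonal_eq_sum_range_succ_mk fun i : ℕ × ℕ =>
    (-1 : ℂ) ^ i.1 * y ^ (-((i.1 : ℤ) ^ 2 + i.1)), mul_sum]
  refine sum_congr rfl fun i hi => ?_
  rw [← mem_antidiagonal.1 hi, mul_mul_mul_comm, ← pow_add, ← zpow_natCast y, ← zpow_natCast y,
    ← zpow_add₀ hy₀, show i.1 + i.2 + 1 + i.1 = 2 * i.1 + (i.2 + 1) by ring, pow_add, pow_mul,
    neg_one_sq, one_pow, one_mul]
  push_cast
  ring_nf

/-- The summand obtained by expanding `gaussPsi (y²) * partialTheta y a` and multiplying by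
`(-1)^a y^a²`; its symmetry allows the resulting double series to be summed. -/
def indefThetaTerm (y : ℂ) (a m : ℤ) : ℂ :=
  ((-1) ^ a * y ^ (a ^ 2 + (2 * m + 1) * (2 * m + 2)) -
    y ^ ((a - (2 * m + 1)) ^ 2 + (2 * m + 1))) / (1 + y ^ (4 * m + 2))

lemma indefThetaTerm_neg_add_one (hy₀ : y ≠ 0) (hy : ‖y‖ < 1) (a m : ℤ) :
    indefThetaTerm y a (-(m + 1)) = indefThetaTerm y (-a) m := by
  have h₁ := one_add_zpow_ne_zero hy (k := 4 * m + 2) (by omega)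
  have h₂ := one_add_zpow_ne_zero hy (k := 4 * -(m + 1) + 2) (by omega)
  have hsign : (-1 : ℂ) ^ (-a) = (-1) ^ a := by rw [zpow_neg, ← inv_zpow, inv_neg_one]
  rw [indefThetaTerm, indefThetaTerm, div_eq_div_iff h₂ h₁, hsign]
  simp only [mul_add, sub_mul, mul_one, mul_assoc, ← zpow_add₀ hy₀]
  ring_nf

lemma indefThetaTerm_zero (y : ℂ) (m : ℤ) : indefThetaTerm y 0 m = 0 := by
  rw [indefThetaTerm, zpow_zero, one_mul,
    show (0 - (2 * m + 1)) ^ 2 + (2 * m + 1) = 0 ^ 2 + (2 * m + 1) * (2 * m + 2) by ring, sub_self,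
    zero_div]

lemma one_add_mul_sum_range_neg_one_pow (hy₀ : y ≠ 0) (m : ℤ) (a : ℕ) :
    (1 + y ^ (4 * m + 2)) * ∑ j ∈ range a, (-1) ^ j * y ^ ((4 * m + 2) * (m - j)) =
      y ^ ((4 * m + 2) * (m + 1)) - (-1) ^ a * y ^ ((4 * m + 2) * (m + 1 - a)) := by
  induction a with
  | zero => simp
  | succ a ih =>
    have hpow : y ^ ((4 * m + 2) * (m + 1 - a)) =
        y ^ (4 * m + 2) * y ^ ((4 * m + 2) * (m - a)) := by
      rw [← zpow_add₀ hy₀]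
      ring_nf
    rw [sum_range_succ, mul_add, ih, hpow, pow_succ, Nat.cast_add_one, add_sub_add_right_eq_sub]
    ring

lemma hasSum_indefThetaTerm (hy₀ : y ≠ 0) (hy : ‖y‖ < 1) (a : ℕ) :
    HasSum (fun m : ℤ => indefThetaTerm y a m)
      (gaussPsi (y ^ 2) * ((-1) ^ a * y ^ a ^ 2 * partialTheta y a)) := by
  have hsum := (hasSum_sum fun j (_ : j ∈ range a) => (hasSum_gaussPsi_of_shift hy₀ hy j).mul_left
    ((-1) ^ j * y ^ (-((j : ℤ) ^ 2 + j)))).mul_left ((-1) ^ a * y ^ a ^ 2)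
  rw [← sum_mul, mul_comm (∑ _ ∈ _, _), mul_left_comm] at hsum
  refine hsum.congr_fun fun m => ?_
  have hne := one_add_zpow_ne_zero hy (k := 4 * m + 2) (by omega)
  have hterm : ∀ j : ℕ, (-1) ^ j * y ^ (-((j : ℤ) ^ 2 + j)) *
      y ^ ((2 * m - j) * (2 * m - j + 1)) = (-1) ^ j * y ^ ((4 * m + 2) * (m - j)) := fun j => by
    rw [mul_assoc, ← zpow_add₀ hy₀]
    ring_nf
  have hexp₁ : y ^ ((a : ℤ) ^ 2 + (2 * m + 1) * (2 * m + 2)) =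
      y ^ a ^ 2 * y ^ ((4 * m + 2) * (m + 1)) := by
    rw [← zpow_natCast y, ← zpow_add₀ hy₀]
    push_cast
    ring_nf
  have hexp₂ : y ^ (((a : ℤ) - (2 * m + 1)) ^ 2 + (2 * m + 1)) =
      y ^ a ^ 2 * y ^ ((4 * m + 2) * (m + 1 - a)) := by
    rw [← zpow_natCast y, ← zpow_add₀ hy₀]
    push_cast
    ring_nf
  rw [sum_congr rfl fun j _ => hterm j, indefThetaTerm, div_eq_iff hne, mul_assoc,
    mul_comm (∑ _ ∈ _, _), one_add_mul_sum_range_neg_one_pow hy₀, hexp₁, hexp₂, zpow_natCast]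
  rcases neg_one_pow_eq_or ℂ a with hsign | hsign
  all_goals
    rw [hsign]
    ring

lemma hasSum_indefThetaTerm_prod (hy₀ : y ≠ 0) (hy : ‖y‖ < 1) :
    HasSum (fun x : ℤ × ℕ => indefThetaTerm y x.1 x.2)
      (theta4 y * appellSum (y ^ 2) - theta3 y * lambertTwo y) := by
  have happell := summable_norm_pow_div_one_add_pow hy
    (d := fun n => (2 * n + 1) * (2 * n + 2)) (e := fun n => 4 * n + 2) (fun n => by nlinarith)
    (fun n => by omega)
  have hlambert := summable_norm_pow_div_one_add_pow hy
    (d := fun n => 2 * n + 1) (e := fun n => 4 * n + 2) (fun n => by omega) (fun n => by omega)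
  have hsum := (hasSum_shift_mul (summable_norm_theta4 hy₀ hy) happell 0).sub
    (hasSum_shift_mul (summable_norm_theta3 hy₀ hy) hlambert fun n => -(2 * n + 1))
  have hK : appellSum (y ^ 2) =
      ∑' n : ℕ, y ^ ((2 * n + 1) * (2 * n + 2)) / (1 + y ^ (4 * n + 2)) := by
    refine tsum_congr fun n => ?_
    ring_nf
  rw [hK]
  refine hsum.congr_fun fun x => ?_
  rw [indefThetaTerm, sub_div, zpow_add₀ hy₀, zpow_add₀ hy₀ _ (2 * (x.2 : ℤ) + 1), ← sub_eq_add_neg,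
    Pi.zero_apply, add_zero, ← mul_assoc, mul_div_assoc, mul_div_assoc]
  norm_cast

lemma indefTheta_mul_gaussPsi (hy₀ : y ≠ 0) (hy : ‖y‖ < 1) :
    indefTheta y * gaussPsi (y ^ 2) =
      theta4 y * appellSum (y ^ 2) - theta3 y * lambertTwo y := by
  have hprod := hasSum_indefThetaTerm_prod hy₀ hy
  have hfiber (a : ℤ) : Summable fun m : ℕ => indefThetaTerm y a m := hprod.summable.prod_factor a
  have hrow (a : ℕ) : ∑' m : ℕ, indefThetaTerm y a m + ∑' m : ℕ, indefThetaTerm y (-a) m =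
      gaussPsi (y ^ 2) * ((-1) ^ a * y ^ a ^ 2 * partialTheta y a) := by
    refine ((hfiber a).hasSum.add (hfiber (-a)).hasSum).unique ?_
    simpa only [indefThetaTerm_neg_add_one hy₀ hy] using
      (hasSum_indefThetaTerm hy₀ hy a).nat_add_neg_add_one
  have hfold := (hprod.prod_fiberwise fun a => (hfiber a).hasSum).nat_add_neg
  simp only [hrow, indefThetaTerm_zero, tsum_zero, add_zero] at hfold
  rw [mul_comm]
  exact ((hasSum_indefTheta hy₀ hy).mul_left _).unique hfold

end IndefiniteTheta

section WeightTwo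

variable {y : ℂ}

lemma qPochInf_pow_three (hy₀ : y ≠ 0) (hy : ‖y‖ < 1) :
    qPochInf (y ^ 2) (y ^ 2) ^ 3 = theta3 y * theta4 y * gaussPsi (y ^ 2) := by
  have hy2 := norm_pow_lt_one hy two_ne_zero
  have hne := qPochInf_sq_ne_zero hy
  have hne' := qPochInf_sq_ne_zero hy2
  rw [theta3_mul_theta4 hy₀ hy, theta4_eq_sq_div (pow_ne_zero 2 hy₀) hy2, gaussPsi_eq_sq_div hy2]
  generalize qPochInf ((y ^ 2) ^ 2) ((y ^ 2) ^ 2) = b at *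
  field_simp

lemma lambertTwo_neg (y : ℂ) : lambertTwo (-y) = -lambertTwo y := by
  rw [lambertTwo, lambertTwo, ← tsum_neg]
  refine tsum_congr fun n => ?_
  rw [Odd.neg_pow (odd_two_mul_add_one n), Even.neg_pow ⟨2 * n + 1, by ring⟩, neg_div]

lemma theta4_sq_eq_sub_lambertTwo (hy₀ : y ≠ 0) (hy : ‖y‖ < 1) :
    theta4 y ^ 2 = theta3 (y ^ 2) ^ 2 - 4 * lambertTwo y := by
  have hθ := theta3_sq_eq_add_lambertTwo (neg_ne_zero.2 hy₀) (by rwa [norm_neg])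
  rw [theta3_neg hy₀ hy, neg_sq, lambertTwo_neg] at hθ
  rw [hθ]
  ring

/-- The Appell–Lerch sums of `mockSeries` and `indefTheta` cancel, leaving a modular form. -/
lemma qPochInf_pow_three_mul_mock_add_indef (hy₀ : y ≠ 0) (hy : ‖y‖ < 1) :
    qPochInf (y ^ 2) (y ^ 2) ^ 3 * (mockSeries (y ^ 2) + indefTheta y / theta4 y) =
      -theta3 y ^ 2 * lambertTwo y := by
  have hθ := theta4_ne_zero hy₀ hy
  have hmock := mockSeries_mul_gaussPsi (pow_ne_zero 2 hy₀) (norm_pow_lt_one hy two_ne_zero)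
  have hindef := indefTheta_mul_gaussPsi hy₀ hy
  rw [qPochInf_pow_three hy₀ hy]
  field_simp
  linear_combination theta3 y * theta4 y * hmock + theta3 y * hindef

theorem eisensteinOdd_eq_mock_add_indef (hy₀ : y ≠ 0) (hy : ‖y‖ < 1) :
    28 * (y * gaussPsi (y ^ 2) ^ 4) + theta4 (y ^ 2) ^ 4 + 48 * (y ^ 2 * gaussPsi (y ^ 4) ^ 4) +
        4 * (qPochInf (y ^ 2) (y ^ 2) ^ 3 * (mockSeries (y ^ 2) + indefTheta y / theta4 y)) =
      eisensteinOdd y := by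
  have hpsi₁ := lambertFour_eq hy₀ hy
  have hpsi₂ := lambertFour_eq (pow_ne_zero 2 hy₀) (norm_pow_lt_one hy two_ne_zero)
  rw [← pow_mul] at hpsi₂
  have htheta : theta4 (y ^ 2) ^ 4 = theta3 y ^ 2 * theta4 y ^ 2 := by
    rw [← mul_pow, theta3_mul_theta4 hy₀ hy, ← pow_mul]
  rw [← hpsi₁, ← hpsi₂, ← lambertTwo_sq hy₀ hy, htheta,
    qPochInf_pow_three_mul_mock_add_indef hy₀ hy, eisensteinOdd_eq_theta3_pow_four_add hy₀ hy,
    show theta3 y ^ 4 = (theta3 y ^ 2) ^ 2 by ring, lambertFour_eq_theta3_sq_mul hy₀ hy,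
    theta3_sq_eq_add_lambertTwo hy₀ hy, theta4_sq_eq_sub_lambertTwo hy₀ hy]
  ring

lemma eisensteinOdd_eq_qPochInf_quotient (hy₀ : y ≠ 0) (hy : ‖y‖ < 1) :
    eisensteinOdd y =
      28 * y * qPochInf (y ^ 4) (y ^ 4) ^ 8 / qPochInf (y ^ 2) (y ^ 2) ^ 4 +
        qPochInf (y ^ 2) (y ^ 2) ^ 8 / qPochInf (y ^ 4) (y ^ 4) ^ 4 +
        48 * y ^ 2 * qPochInf (y ^ 8) (y ^ 8) ^ 8 / qPochInf (y ^ 4) (y ^ 4) ^ 4 +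
        4 * qPochInf (y ^ 2) (y ^ 2) ^ 3 * (mockSeries (y ^ 2) + indefTheta y / theta4 y) := by
  have hy₂ := norm_pow_lt_one hy two_ne_zero
  have hy₄ := norm_pow_lt_one hy four_ne_zero
  rw [← eisensteinOdd_eq_mock_add_indef hy₀ hy, gaussPsi_eq_sq_div hy₂, gaussPsi_eq_sq_div hy₄,
    theta4_eq_sq_div (pow_ne_zero 2 hy₀) hy₂]
  simp only [← pow_mul, Nat.reduceMul]
  ring

end WeightTwo

section Nome

variable {q : ℂ}

lemma nome_ne_zero (τ : ℂ) : nome τ ≠ 0 := Complex.exp_ne_zero _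

lemma norm_nome_lt_one {τ : ℂ} (hτ : 0 < τ.im) : ‖nome τ‖ < 1 := by
  have hre : (2 * (π : ℂ) * I * τ).re = -(2 * π * τ.im) := by simp
  rw [nome, Complex.norm_exp, Real.exp_lt_one_iff, hre, neg_lt_zero]
  positivity

lemma nome_ofNat_mul (n : ℕ) [n.AtLeastTwo] (τ : ℂ) :
    nome (OfNat.ofNat n * τ) = nome τ ^ (OfNat.ofNat n : ℕ) := by
  rw [nome, nome, ← Complex.exp_nat_mul, Nat.cast_ofNat, mul_left_comm]

lemma dedekindEta_ofNat_mul (n : ℕ) [n.AtLeastTwo] (τ : ℂ) :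
    dedekindEta (OfNat.ofNat n * τ) = Complex.exp (π * I * τ / 12) ^ (OfNat.ofNat n : ℕ) *
      qPochInf (nome τ ^ (OfNat.ofNat n : ℕ)) (nome τ ^ (OfNat.ofNat n : ℕ)) := by
  rw [dedekindEta, nome_ofNat_mul, ← Complex.exp_nat_mul, Nat.cast_ofNat, mul_left_comm,
    mul_div_assoc, qPochInf]
  simp only [pow_succ']

lemma exp_pow_twentyFour (τ : ℂ) : Complex.exp (π * I * τ / 12) ^ 24 = nome τ := by
  rw [nome, ← Complex.exp_nat_mul]
  push_cast
  ring_nf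

lemma Theta4_eq_theta4 {τ : ℂ} (hτ : 0 < τ.im) : Theta4 τ = theta4 (nome τ ^ 4) := by
  have hy := norm_pow_lt_one (norm_nome_lt_one hτ) four_ne_zero
  have hsum := (summable_norm_theta4 (pow_ne_zero 4 (nome_ne_zero τ)) hy).of_norm
  have heven : Function.Even fun n : ℤ => (-1) ^ n * (nome τ ^ 4) ^ n ^ 2 := fun n => by
    simp only [zpow_neg, ← inv_zpow, inv_neg_one, neg_sq]
  have hnat := tsum_pnat_eq_tsum_succ
    (f := fun n : ℕ => (-1) ^ (n : ℤ) * (nome τ ^ 4) ^ (n : ℤ) ^ 2)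
  rw [theta4, tsum_int_eq_zero_add_two_mul_tsum_pnat heven hsum, Theta4]
  simp only [pow_mul]
  norm_cast at hnat ⊢
  rw [hnat]
  simp

lemma Estar_four_mul {τ : ℂ} (hτ : 0 < τ.im) : Estar (4 * τ) = eisensteinOdd (nome τ ^ 4) := by
  rw [Estar, nome_ofNat_mul, eisensteinOdd_eq_tsum_sigmaOdd
    (norm_pow_lt_one (norm_nome_lt_one hτ) four_ne_zero)]

lemma mul_Mser (hq₀ : q ≠ 0) : q * Mser q = mockSeries (q ^ 8) := by
  rw [Mser, mul_inv_cancel_left₀ hq₀, mockSeries]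
  refine tsum_congr fun n => ?_
  have hpow : ∀ k : ℕ, q ^ (16 * (k + 1) - 8) = q ^ 8 * ((q ^ 8) ^ 2) ^ k := fun k => by
    rw [show 16 * (k + 1) - 8 = 8 + 8 * 2 * k by omega, pow_add, pow_mul, pow_mul]
  simp only [hpow, prod_pow, qPoch, neg_mul, sub_neg_eq_add, pow_mul]

lemma mul_Fser_zero (q : ℂ) : q * Fser 0 q = indefTheta (q ^ 4) := by
  rw [Fser, indefTheta, ← tsum_mul_left]
  refine tsum_congr fun b => ?_
  rw [← tsum_mul_left]
  refine tsum_congr fun j => ?_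
  have hexp : 4 * (b + 1 + j) ^ 2 - (2 * b + 1) ^ 2 + 1 =
      4 * ((j + 1) ^ 2 + b * (2 * j + 1)) := by
    have hsq : 4 * (b + 1 + j) ^ 2 =
        (4 * ((j + 1) ^ 2 + b * (2 * j + 1)) - 1) + (2 * b + 1) ^ 2 := by
      zify [show 1 ≤ 4 * ((j + 1) ^ 2 + b * (2 * j + 1)) by nlinarith]
      ring
    rw [hsq, Nat.add_sub_cancel, Nat.sub_add_cancel (by nlinarith)]
  rw [← pow_mul, ← hexp, pow_succ q, pow_zero, mul_one,
    show b + 1 + j + b = 2 * b + (j + 1) by ring, pow_add, pow_mul, neg_one_sq, one_pow, one_mul]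
  ring

end Nome

end

/-- For `τ ∈ ℍ`: `𝒬(q) + 4ℱ₀(q)/Θ₄(τ) = E*(4τ)/η(8τ)³`, with
`𝒬(q) = 28η(16τ)⁸/η(8τ)⁷ + η(8τ)⁵/η(16τ)⁴ + 48η(32τ)⁸/(η(8τ)³η(16τ)⁴) + 4M(q)`. -/
theorem stmt8 (τ : ℂ) (hτ : 0 < τ.im) :
    28 * dedekindEta (16 * τ) ^ 8 / dedekindEta (8 * τ) ^ 7 +
        dedekindEta (8 * τ) ^ 5 / dedekindEta (16 * τ) ^ 4 +
        48 * dedekindEta (32 * τ) ^ 8 /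
          (dedekindEta (8 * τ) ^ 3 * dedekindEta (16 * τ) ^ 4) +
        4 * Mser (nome τ) + 4 * Fser 0 (nome τ) / Theta4 τ =
      Estar (4 * τ) / dedekindEta (8 * τ) ^ 3 := by
  have hq₀ := nome_ne_zero τ
  have hq := norm_nome_lt_one hτ
  have hθ := theta4_ne_zero (pow_ne_zero 4 hq₀) (norm_pow_lt_one hq four_ne_zero)
  have hJ (n : ℕ) [NeZero n] : qPochInf (nome τ ^ n) (nome τ ^ n) ≠ 0 :=
    have h := norm_pow_lt_one hq (NeZero.ne n)
    qPochInf_ne_zero h h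
  have hJ₈ := hJ 8
  have hJ₁₆ := hJ 16
  have hE :=
    eisensteinOdd_eq_qPochInf_quotient (pow_ne_zero 4 hq₀) (norm_pow_lt_one hq four_ne_zero)
  simp only [← pow_mul, Nat.reduceMul] at hE
  rw [Estar_four_mul hτ, hE, Theta4_eq_theta4 hτ, dedekindEta_ofNat_mul, dedekindEta_ofNat_mul,
    dedekindEta_ofNat_mul, ← mul_Mser hq₀, ← mul_Fser_zero]
  have he := exp_pow_twentyFour τ
  have he₀ := Complex.exp_ne_zero (π * I * τ / 12)
  generalize Complex.exp (π * I * τ / 12) = e at *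
  generalize qPochInf (nome τ ^ 8) (nome τ ^ 8) = J₈, qPochInf (nome τ ^ 16) (nome τ ^ 16) = J₁₆,
    Mser (nome τ) = M, Fser 0 (nome τ) = F, theta4 (nome τ ^ 4) = θ at *
  rw [← he]
  field_simp
  ring
end
end

section
/- For every τ in the complex upper half-plane ℍ, one has 16·Θ₂(τ)⁴ + Θ₃(τ)⁴ = E*(4τ). -/
noncomputable section
open Complex Real

/-- `Θ₂(τ) = Σ_{n≥0} q^{(2n+1)²}`. -/
def Theta2 (τ : ℂ) : ℂ := ∑' n : ℕ, nome τ ^ ((2 * n + 1) ^ 2)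

/-- `Θ₃(τ) = 1 + 2 Σ_{n≥1} q^{4n²}`. -/
def Theta3 (τ : ℂ) : ℂ := 1 + 2 * ∑' n : ℕ, nome τ ^ (4 * (n + 1) ^ 2)

/-!
As functions of `t = 4τ`, both sides are modular forms of weight `2` on `Γ₀(2)` with value `1` at
`i∞`. On the left this follows from writing `Θ₂` and `Θ₃` through Jacobi's `θ`; on the right, from
`E*(t) = 2 E₂(2t) - E₂(t)`, where the quasi-modular defects of the two summands cancel.
The difference `f` of the two sides then vanishes at `i∞`, so the product `f · f|S · f|ST` of its
translates by the three cosets of `Γ₀(2)` is a cusp form of level one and weight `6 < 12`, hence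
zero, and therefore `f = 0`.
-/

open UpperHalfPlane hiding I
open Filter Topology Asymptotics ModularGroup
open EisensteinSeries (E2)
open scoped ModularForm MatrixGroups Manifold ArithmeticFunction.sigma

/-- The filter `im t → +∞` on `ℂ`; `UpperHalfPlane.atImInfty` is its counterpart on `ℍ`. -/
local notation "I∞" => comap Complex.im atTop

theorem im_neg_one_div_pos {t : ℂ} (ht : 0 < t.im) : 0 < (-1 / t).im := by
  rw [neg_div, one_div, ← inv_neg]
  exact im_inv_neg_coe_pos ⟨t, ht⟩

theorem ne_zero_of_im_pos {t : ℂ} (ht : 0 < t.im) : t ≠ 0 := by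
  rintro rfl
  exact ht.ne rfl

theorem tendsto_comap_im_of_im_eq {φ : ℂ → ℂ} {r : ℝ} (hr : 0 < r)
    (hφ : ∀ t, (φ t).im = r * t.im) : Tendsto φ I∞ I∞ := by
  rw [tendsto_comap_iff, show Complex.im ∘ φ = fun t ↦ r * t.im from funext hφ]
  exact tendsto_comap.const_mul_atTop hr

theorem tendsto_div_two_comap_im : Tendsto (fun t : ℂ ↦ t / 2) I∞ I∞ :=
  tendsto_comap_im_of_im_eq (r := 1 / 2) (by norm_num) fun t ↦ by
    rw [div_ofNat_im]
    ring

theorem tendsto_add_one_comap_im : Tendsto (fun t : ℂ ↦ t + 1) I∞ I∞ :=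
  tendsto_comap_im_of_im_eq one_pos fun t ↦ by simp

theorem tendsto_two_mul_comap_im : Tendsto (fun t : ℂ ↦ 2 * t) I∞ I∞ :=
  tendsto_comap_im_of_im_eq two_pos fun t ↦ by simp

/-! ### Modular forms on `Γ₀(2)` -/

theorem slash_T_apply (f : ℍ → ℂ) (k : ℤ) (z : ℍ) : (f ∣[k] T) z = f ((1 : ℝ) +ᵥ z) := by
  have hdenom : denom T z = 1 := by
    rw [ModularGroup.denom_apply]
    simp [T]
  rw [ModularForm.SL_slash_apply, modular_T_smul, hdenom, one_zpow, mul_one]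

theorem slash_S_slash_S {k : ℤ} (hk : Even k) (f : ℍ → ℂ) : (f ∣[k] S) ∣[k] S = f := by
  have hS : S * S = -1 := by decide
  ext z
  have hdenom : denom (-1 : SL(2, ℤ)) z = -1 := by
    rw [ModularGroup.denom_apply]
    simp
  rw [← SlashAction.slash_mul, hS, ModularForm.SL_slash_apply, hdenom, hk.neg.neg_one_zpow,
    mul_one, SL_neg_smul, one_smul]

theorem eq_zero_of_slash_S_of_slash_T_of_weight_lt_twelve {k : ℤ} (hk : k < 12) {f : ℍ → ℂ}
    (hf : MDiff f) (hS : f ∣[k] S = f) (hT : f ∣[k] T = f) (h0 : IsZeroAtImInfty f) : f = 0 := by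
  have hSL := SlashInvariantForm.slash_action_generators_SL2Z hS hT
  let F : CuspForm 𝒮ℒ k :=
    { toFun := f
      slash_action_eq' := by
        rintro _ ⟨γ, rfl⟩
        exact hSL γ
      holo' := hf
      zero_at_cusps' := fun {c} hc ↦ by
        rw [Subgroup.IsArithmetic.isCusp_iff_isCusp_SL2Z] at hc
        rw [OnePoint.isZeroAt_iff_forall_SL2Z hc]
        intro γ _
        rwa [hSL γ] }
  have hF : F = 0 :=
    rank_zero_iff_forall_zero.mp (CuspForm.rank_eq_zero_of_weight_lt_twelve hk) F
  exact congrArg DFunLike.coe hF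

theorem sub_slash (k : ℤ) (γ : SL(2, ℤ)) (f g : ℍ → ℂ) :
    (f - g) ∣[k] γ = f ∣[k] γ - g ∣[k] γ := by
  rw [sub_eq_add_neg, SlashAction.add_slash, SlashAction.neg_slash, sub_eq_add_neg]

/-- Modular forms of even weight `k` on `Γ₀(2)`. Invariance is only required under the generators
`T` and `S T² S⁻¹` (the remaining generator `-1` acts trivially in even weight), and boundedness at
the two cusps `∞` and `0 = S ∞`. -/
structure IsModularGammaZeroTwo (k : ℤ) (f : ℍ → ℂ) : Prop where
  mdifferentiable : MDiff f
  slash_T : f ∣[k] T = f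
  slash_S_mul_T_sq : f ∣[k] (S * T ^ 2) = f ∣[k] S
  isBoundedAtImInfty : IsBoundedAtImInfty f
  isBoundedAtImInfty_slash_S : IsBoundedAtImInfty (f ∣[k] S)

namespace IsModularGammaZeroTwo

variable {k : ℤ} {f g : ℍ → ℂ}

theorem sub (hf : IsModularGammaZeroTwo k f) (hg : IsModularGammaZeroTwo k g) :
    IsModularGammaZeroTwo k (f - g) where
  mdifferentiable := hf.mdifferentiable.sub hg.mdifferentiable
  slash_T := by rw [sub_slash, hf.slash_T, hg.slash_T]
  slash_S_mul_T_sq := by simp only [sub_slash, hf.slash_S_mul_T_sq, hg.slash_S_mul_T_sq]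
  isBoundedAtImInfty := hf.isBoundedAtImInfty.sub hg.isBoundedAtImInfty
  isBoundedAtImInfty_slash_S := by
    rw [sub_slash]
    exact hf.isBoundedAtImInfty_slash_S.sub hg.isBoundedAtImInfty_slash_S

theorem slash_S_mul_T_mul_S (hf : IsModularGammaZeroTwo k f) :
    f ∣[k] (S * T * S) = f ∣[k] (S * T) := by
  have hrel : S * T * S = T⁻¹ * (S * T⁻¹) := by decide
  have hST : S * T = S * T ^ 2 * T⁻¹ := by decide
  have hT_inv : f ∣[k] T⁻¹ = f := by
    conv_lhs => rw [← hf.slash_T, ← SlashAction.slash_mul, mul_inv_cancel, SlashAction.slash_one]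
  calc f ∣[k] (S * T * S) = (f ∣[k] S) ∣[k] T⁻¹ := by
        rw [hrel, SlashAction.slash_mul, hT_inv, SlashAction.slash_mul]
    _ = f ∣[k] (S * T) := by rw [hST, SlashAction.slash_mul _ (S * T ^ 2), hf.slash_S_mul_T_sq]

theorem eq_zero_of_isZeroAtImInfty (hf : IsModularGammaZeroTwo k f) (hk : Even k) (hk4 : k < 4)
    (h0 : IsZeroAtImInfty f) : f = 0 := by
  have hdS : MDiff (f ∣[k] S) := hf.mdifferentiable.slash k S
  have hdST : MDiff (f ∣[k] (S * T)) := hf.mdifferentiable.slash k _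
  have hbST : IsBoundedAtImInfty (f ∣[k] (S * T)) := by
    rw [SlashAction.slash_mul]
    exact hf.isBoundedAtImInfty_slash_S.slash k (by simp)
  have norm_slash_S : (f * (f ∣[k] S * f ∣[k] (S * T))) ∣[k + (k + k)] S =
      f * (f ∣[k] S * f ∣[k] (S * T)) := by
    rw [ModularForm.mul_slash_SL2, ModularForm.mul_slash_SL2, slash_S_slash_S hk,
      ← SlashAction.slash_mul, hf.slash_S_mul_T_mul_S, mul_left_comm]
  have norm_slash_T : (f * (f ∣[k] S * f ∣[k] (S * T))) ∣[k + (k + k)] T =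
      f * (f ∣[k] S * f ∣[k] (S * T)) := by
    rw [ModularForm.mul_slash_SL2, ModularForm.mul_slash_SL2, hf.slash_T,
      ← SlashAction.slash_mul, ← SlashAction.slash_mul, mul_assoc S, ← sq, hf.slash_S_mul_T_sq,
      mul_comm (f ∣[k] S)]
  have norm_zero : IsZeroAtImInfty (f * (f ∣[k] S * f ∣[k] (S * T))) :=
    h0.zero_mul_isBoundedUnder_le
      ((isBigO_one_iff ℝ).mp (hf.isBoundedAtImInfty_slash_S.mul hbST))
  have norm_eq_zero := eq_zero_of_slash_S_of_slash_T_of_weight_lt_twelve (by lia)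
    (hf.mdifferentiable.mul (hdS.mul hdST)) norm_slash_S norm_slash_T norm_zero
  rw [mul_eq_zero_iff hf.mdifferentiable (hdS.mul hdST), mul_eq_zero_iff hdS hdST] at norm_eq_zero
  simpa only [ModularForm.SL_slash, SlashAction.slash_eq_zero_iff, or_self] using norm_eq_zero

theorem eq_of_tendsto (hf : IsModularGammaZeroTwo k f) (hg : IsModularGammaZeroTwo k g)
    (hk : Even k) (hk4 : k < 4) {c : ℂ} (hfc : Tendsto f atImInfty (𝓝 c))
    (hgc : Tendsto g atImInfty (𝓝 c)) : f = g := by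
  have h0 : IsZeroAtImInfty (f - g) := by
    have := hfc.sub hgc
    rwa [sub_self] at this
  exact sub_eq_zero.mp ((hf.sub hg).eq_zero_of_isZeroAtImInfty hk hk4 h0)

theorem of_neg_one_div {F G : ℂ → ℂ} (hF : DifferentiableOn ℂ F {t | 0 < t.im})
    (hFT : ∀ t : ℂ, 0 < t.im → F (t + 1) = F t) (hGT : ∀ t : ℂ, 0 < t.im → G (t + 2) = G t)
    (hFS : ∀ t : ℂ, 0 < t.im → F (-1 / t) = t ^ k * G t)
    {a b : ℂ} (hFa : Tendsto F I∞ (𝓝 a)) (hGb : Tendsto G I∞ (𝓝 b)) :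
    IsModularGammaZeroTwo k (fun z : ℍ ↦ F z) := by
  have hslash_S : (fun z : ℍ ↦ F z) ∣[k] S = fun z : ℍ ↦ G z := by
    ext z
    rw [SlashInvariantForm.slash_S_apply, coe_mk, inv_neg, ← one_div, ← neg_div, hFS z z.im_pos,
      mul_comm, ← mul_assoc, ← zpow_add₀ z.ne_zero, neg_add_cancel, zpow_zero, one_mul]
  refine ⟨?_, ?_, ?_, (hFa.comp tendsto_coe_atImInfty).isBigO_one ℝ, ?_⟩
  · exact mdifferentiable_iff.mpr <| hF.congr fun t ht ↦ by simp [ofComplex_apply_of_im_pos ht]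
  · ext z
    simpa [slash_T_apply, add_comm] using hFT z z.im_pos
  · ext z
    rw [sq, SlashAction.slash_mul, hslash_S, SlashAction.slash_mul, slash_T_apply, slash_T_apply]
    simpa [show (1 : ℂ) + (1 + z) = z + 2 by ring] using hGT z z.im_pos
  · rw [hslash_S]
    exact (hGb.comp tendsto_coe_atImInfty).isBigO_one ℝ

end IsModularGammaZeroTwo

/-! ### Theta series -/

theorem nome_add (τ a : ℂ) : nome (τ + a) = nome τ * nome a := by
  rw [nome, mul_add, Complex.exp_add, nome, nome]

theorem nome_pow (τ : ℂ) (n : ℕ) : nome τ ^ n = cexp (2 * π * I * τ * n) := by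
  rw [nome, ← Complex.exp_nat_mul, mul_comm]

theorem Theta3_eq_jacobiTheta {τ : ℂ} (hτ : 0 < τ.im) : Theta3 τ = jacobiTheta (8 * τ) := by
  have hterm (n : ℕ) : nome τ ^ (4 * (n + 1) ^ 2) = cexp (π * I * (n + 1) ^ 2 * (8 * τ)) := by
    rw [nome_pow]
    congr 1
    push_cast
    ring
  rw [jacobiTheta_eq_tsum_nat (by simpa using hτ), Theta3]
  simp only [hterm]

theorem two_mul_Theta2 {τ : ℂ} (hτ : 0 < τ.im) :
    2 * Theta2 τ = jacobiTheta (2 * τ) - jacobiTheta (8 * τ) := by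
  have hall := hasSum_nat_jacobiTheta (τ := 2 * τ) (by simpa using hτ)
  have heven := hasSum_nat_jacobiTheta (τ := 8 * τ) (by simpa using hτ)
  have hterm (n : ℕ) : cexp (π * I * (((2 * n : ℕ) : ℂ) + 1) ^ 2 * (2 * τ)) =
      nome τ ^ ((2 * n + 1) ^ 2) := by
    rw [nome_pow]
    congr 1
    push_cast
    ring
  have hsummable : Summable fun n : ℕ ↦ nome τ ^ ((2 * n + 1) ^ 2) :=
    (hall.summable.comp_injective (mul_right_injective₀ two_ne_zero)).congr hterm
  have hsplit := HasSum.even_add_odd (f := fun n : ℕ ↦ cexp (π * I * ((n : ℂ) + 1) ^ 2 * (2 * τ)))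
    (by simpa only [hterm] using hsummable.hasSum)
    (heven.congr_fun fun n ↦ by
      congr 1
      push_cast
      ring)
  rw [Theta2]
  linear_combination 2 * hsplit.unique hall

theorem Theta2_add_quarter (τ : ℂ) : Theta2 (τ + 1 / 4) = I * Theta2 τ := by
  have hnome : nome (1 / 4) = I := by
    rw [nome, show 2 * π * I * (1 / 4) = π / 2 * I by ring, exp_pi_div_two_mul_I]
  have hI (n : ℕ) : I ^ (2 * n + 1) ^ 2 = I := by
    rw [show (2 * n + 1) ^ 2 = 4 * (n ^ 2 + n) + 1 by ring, pow_succ, pow_mul, I_pow_four, one_pow,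
      one_mul]
  simp only [Theta2, nome_add, hnome, mul_pow, hI, tsum_mul_right, mul_comm I]

theorem jacobiTheta_add_two (s : ℂ) : jacobiTheta (s + 2) = jacobiTheta s := by
  rw [add_comm, jacobiTheta_two_add]

theorem jacobiTheta_add_one {s : ℂ} (hs : 0 < s.im) :
    jacobiTheta (s + 1) = 2 * jacobiTheta (4 * s) - jacobiTheta s := by
  have hTheta2 : Theta2 (s / 2 + 1 / 4 + 1 / 4) = -Theta2 (s / 2) := by
    rw [Theta2_add_quarter, Theta2_add_quarter, ← mul_assoc, I_mul_I, neg_one_mul]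
  have h := two_mul_Theta2 (τ := s / 2) (by simpa using hs)
  have h' := two_mul_Theta2 (τ := s / 2 + 1 / 4 + 1 / 4) (by simpa using hs)
  rw [show 2 * (s / 2 + 1 / 4 + 1 / 4) = s + 1 by ring,
    show 8 * (s / 2 + 1 / 4 + 1 / 4) = 4 * s + 2 + 2 by ring, jacobiTheta_add_two,
    jacobiTheta_add_two, hTheta2] at h'
  rw [show 2 * (s / 2) = s by ring, show 8 * (s / 2) = 4 * s by ring] at h
  linear_combination -h - h'

theorem jacobiTheta_neg_one_div {s : ℂ} (hs : 0 < s.im) :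
    jacobiTheta (-1 / s) = (-I * s) ^ (1 / 2 : ℂ) * jacobiTheta s := by
  rw [neg_div, one_div, ← inv_neg]
  simpa only [modular_S_smul, coe_mk] using jacobiTheta_S_smul ⟨s, hs⟩

theorem ofReal_mul_cpow {r : ℝ} (hr : 0 < r) (w a : ℂ) :
    ((r : ℂ) * w) ^ a = (r : ℂ) ^ a * w ^ a := by
  rcases eq_or_ne w 0 with rfl | hw
  · rcases eq_or_ne a 0 with rfl | ha <;> simp [*]
  · have hr' : (r : ℂ) ≠ 0 := ofReal_ne_zero.mpr hr.ne'
    rw [cpow_def_of_ne_zero (mul_ne_zero hr' hw), cpow_def_of_ne_zero hr', cpow_def_of_ne_zero hw,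
      log_ofReal_mul hr hw, ofReal_log hr.le, add_mul, Complex.exp_add]

theorem cpow_half_pow_four (w : ℂ) : (w ^ (1 / 2 : ℂ)) ^ 4 = w ^ 2 := by
  rw [← cpow_nat_mul]
  norm_num

theorem four_cpow_half : (4 : ℂ) ^ (1 / 2 : ℂ) = 2 := by
  rw [show (4 : ℂ) = 2 ^ 2 by norm_num, one_div]
  exact sq_cpow_two_inv (by simp)

theorem tendsto_jacobiTheta : Tendsto jacobiTheta I∞ (𝓝 1) := by
  have hexp : Tendsto (fun τ : ℂ ↦ rexp (-π * τ.im)) I∞ (𝓝 0) :=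
    (Real.tendsto_exp_atBot.comp
      (tendsto_id.const_mul_atTop_of_neg (neg_lt_zero.mpr Real.pi_pos))).comp tendsto_comap
  exact tendsto_sub_nhds_zero_iff.mp
    (isBigO_at_im_infty_jacobiTheta_sub_one.trans_tendsto hexp)

theorem differentiableOn_jacobiTheta : DifferentiableOn ℂ jacobiTheta {t | 0 < t.im} :=
  fun _ ht ↦ (differentiableAt_jacobiTheta ht).differentiableWithinAt

/-- The left-hand side of the identity in the variable `t = 4τ`. -/
def thetaQuartic (t : ℂ) : ℂ := 16 * Theta2 (t / 4) ^ 4 + Theta3 (t / 4) ^ 4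

theorem thetaQuartic_eq {t : ℂ} (ht : 0 < t.im) : thetaQuartic t =
    (jacobiTheta (t / 2) - jacobiTheta (2 * t)) ^ 4 + jacobiTheta (2 * t) ^ 4 := by
  have ht4 : 0 < (t / 4).im := by simpa using ht
  rw [thetaQuartic, Theta3_eq_jacobiTheta ht4, show t / 2 = 2 * (t / 4) by ring,
    show 2 * t = 8 * (t / 4) by ring, ← two_mul_Theta2 ht4]
  ring

theorem thetaQuartic_add_one {t : ℂ} (ht : 0 < t.im) : thetaQuartic (t + 1) = thetaQuartic t := by
  have ht4 : 0 < (t / 4).im := by simpa using ht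
  rw [thetaQuartic, thetaQuartic, show (t + 1) / 4 = t / 4 + 1 / 4 by ring, Theta2_add_quarter,
    Theta3_eq_jacobiTheta ht4, Theta3_eq_jacobiTheta (by simpa using ht), mul_add,
    show (8 : ℂ) * (1 / 4) = 2 by norm_num, jacobiTheta_add_two, mul_pow, I_pow_four, one_mul]

theorem thetaQuartic_neg_one_div {t : ℂ} (ht : 0 < t.im) : thetaQuartic (-1 / t) =
    t ^ 2 * (-(jacobiTheta (t / 2) ^ 4 + jacobiTheta (t / 2 + 1) ^ 4) / 4) := by
  have ht2 : 0 < (t / 2).im := by simpa using ht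
  have ht_ne := ne_zero_of_im_pos ht
  have hdouble : jacobiTheta (-1 / t / 2) =
      2 * (-I * (t / 2)) ^ (1 / 2 : ℂ) * jacobiTheta (4 * (t / 2)) := by
    rw [show -1 / t / 2 = -1 / (4 * (t / 2)) by field_simp; norm_num,
      jacobiTheta_neg_one_div (by simpa using ht), mul_left_comm, ← ofReal_ofNat,
      ofReal_mul_cpow four_pos, ofReal_ofNat, four_cpow_half]
  have hhalf : jacobiTheta (2 * (-1 / t)) = (-I * (t / 2)) ^ (1 / 2 : ℂ) * jacobiTheta (t / 2) := by
    rw [← jacobiTheta_neg_one_div ht2]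
    field_simp
  rw [thetaQuartic_eq (im_neg_one_div_pos ht), hdouble, hhalf, mul_right_comm, mul_comm _ (_ ^ _),
    ← mul_sub, ← jacobiTheta_add_one ht2, mul_pow, mul_pow, cpow_half_pow_four, mul_pow, neg_sq,
    I_sq]
  ring

theorem differentiableOn_thetaQuartic : DifferentiableOn ℂ thetaQuartic {t | 0 < t.im} := by
  have hhalf : DifferentiableOn ℂ (fun t ↦ jacobiTheta (t / 2)) {t | 0 < t.im} :=
    differentiableOn_jacobiTheta.comp (by fun_prop) fun t ht ↦ by simpa using ht
  have hdouble : DifferentiableOn ℂ (fun t ↦ jacobiTheta (2 * t)) {t | 0 < t.im} :=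
    differentiableOn_jacobiTheta.comp (by fun_prop) fun t ht ↦ by simpa using ht
  exact (((hhalf.sub hdouble).pow 4).add (hdouble.pow 4)).congr fun t ht ↦ thetaQuartic_eq ht

theorem tendsto_thetaQuartic : Tendsto thetaQuartic I∞ (𝓝 1) := by
  have hhalf := tendsto_jacobiTheta.comp tendsto_div_two_comap_im
  have hdouble := tendsto_jacobiTheta.comp tendsto_two_mul_comap_im
  have him : ∀ᶠ t : ℂ in I∞, 0 < t.im := tendsto_comap.eventually_gt_atTop 0
  have hlim := ((hhalf.sub hdouble).pow 4).add (hdouble.pow 4)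
  rw [show ((1 : ℂ) - 1) ^ 4 + 1 ^ 4 = 1 by norm_num] at hlim
  exact hlim.congr' (him.mono fun t ht ↦ (thetaQuartic_eq ht).symm)

theorem isModularGammaZeroTwo_thetaQuartic :
    IsModularGammaZeroTwo 2 fun z : ℍ ↦ thetaQuartic z := by
  have hhalf := tendsto_jacobiTheta.comp tendsto_div_two_comap_im
  have hhalf_add_one := tendsto_jacobiTheta.comp
    (tendsto_add_one_comap_im.comp tendsto_div_two_comap_im)
  refine .of_neg_one_div differentiableOn_thetaQuartic (fun t ht ↦ thetaQuartic_add_one ht)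
    (fun t _ ↦ ?_) (fun t ht ↦ thetaQuartic_neg_one_div ht) tendsto_thetaQuartic
    (((hhalf.pow 4).add (hhalf_add_one.pow 4)).neg.div_const 4)
  rw [show (t + 2) / 2 = t / 2 + 1 by ring, show t / 2 + 1 + 1 = t / 2 + 2 by ring,
    jacobiTheta_add_two, add_comm (jacobiTheta (t / 2) ^ 4)]

/-! ### Eisenstein series -/

theorem sigma_one_two_mul (m : ℕ) : σ 1 (2 * m) = sigmaOdd (2 * m) + 2 * σ 1 m := by
  have heven : (2 * m).divisors.filter (¬Odd ·) = m.divisors.image (2 * ·) := by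
    ext d
    simp only [Finset.mem_filter, Finset.mem_image, Nat.mem_divisors, Nat.not_odd_iff_even]
    constructor
    · rintro ⟨⟨hd, hm⟩, hd_even⟩
      obtain ⟨c, rfl⟩ := hd_even.two_dvd
      exact ⟨c, ⟨Nat.dvd_of_mul_dvd_mul_left two_pos hd, right_ne_zero_of_mul hm⟩, rfl⟩
    · rintro ⟨c, ⟨hc, hm⟩, rfl⟩
      exact ⟨⟨mul_dvd_mul_left 2 hc, by simpa using hm⟩, even_two_mul c⟩
  rw [ArithmeticFunction.sigma_one_apply, ArithmeticFunction.sigma_one_apply, sigmaOdd,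
    ← Finset.sum_filter_add_sum_filter_not _ (Odd ·), heven,
    Finset.sum_image (mul_right_injective₀ two_ne_zero).injOn, Finset.mul_sum]

theorem sigmaOdd_of_odd {n : ℕ} (hn : Odd n) : sigmaOdd n = σ 1 n := by
  rw [sigmaOdd, ArithmeticFunction.sigma_one_apply, Finset.filter_true_of_mem]
  exact fun d hd ↦ hn.of_dvd_nat (Nat.dvd_of_mem_divisors hd)

theorem tendsto_atImInfty_of_hasSum_qExpansion {h : ℝ} (hh : 0 < h) {c : ℕ → ℂ} {f : ℍ → ℂ}
    (hf : ∀ z : ℍ, HasSum (fun m ↦ c m • Function.Periodic.qParam h z ^ m) (f z)) :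
    Tendsto f atImInfty (𝓝 (c 0)) := by
  have hq_ne (z : ℍ) : Function.Periodic.qParam h z ≠ 0 := Complex.exp_ne_zero _
  have hbdd : IsBoundedAtImInfty fun z ↦ (f z - c 0) / Function.Periodic.qParam h z := by
    refine isBoundedAtImInfty_of_hasSum_qExpansion hh (c := fun m ↦ c (m + 1)) fun z ↦ ?_
    have hshift := ((hasSum_nat_add_iff' 1).mpr (hf z)).div_const (Function.Periodic.qParam h z)
    simpa [pow_succ, ← mul_assoc, mul_div_cancel_right₀ _ (hq_ne z)] using hshift
  have hzero := (qParam_tendsto_atImInfty hh).zero_mul_isBoundedUnder_le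
    ((isBigO_one_iff ℝ).mp hbdd)
  refine tendsto_sub_nhds_zero_iff.mp (hzero.congr fun z ↦ ?_)
  exact mul_div_cancel₀ _ (hq_ne z)

theorem hasSum_sigma_one_mul_nome_pow {t : ℂ} (ht : 0 < t.im) :
    HasSum (fun n : ℕ ↦ (σ 1 n : ℂ) * nome t ^ n) ((1 - E2 (ofComplex t)) / 24) := by
  rw [ofComplex_apply_of_im_pos ht]
  have hE2 := (hasSum_ite_eq (0 : ℕ) (1 : ℂ)).sub
    (EisensteinSeries.hasSum_qExpansion_E2 (z := ⟨t, ht⟩))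
  refine (hE2.div_const 24).congr_fun fun n ↦ ?_
  rcases eq_or_ne n 0 with rfl | hn
  · simp
  · simp only [hn, if_false, smul_eq_mul, nome]
    ring

theorem Estar_eq_E2 {t : ℂ} (ht : 0 < t.im) :
    Estar t = 2 * E2 (ofComplex (2 * t)) - E2 (ofComplex t) := by
  have hσ := hasSum_sigma_one_mul_nome_pow ht
  have hσ_two := (hasSum_sigma_one_mul_nome_pow (t := 2 * t) (by simpa using ht)).mul_left 2
  have hnome : nome (2 * t) = nome t ^ 2 := by rw [two_mul, nome_add, sq]
  have hdiff : HasSum (fun n : ℕ ↦ ((σ 1 n : ℂ) - sigmaOdd n) * nome t ^ n)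
      (2 * ((1 - E2 (ofComplex (2 * t))) / 24) + 0) := by
    refine HasSum.even_add_odd (hσ_two.congr_fun fun m ↦ ?_) (hasSum_zero.congr_fun fun m ↦ ?_)
    · rw [sigma_one_two_mul, hnome, ← pow_mul]
      push_cast
      ring
    · rw [sigmaOdd_of_odd (odd_two_mul_add_one m), sub_self, zero_mul]
  have hodd := (hasSum_nat_add_iff' 1).mpr (hσ.sub hdiff)
  simp only [← sub_mul, sub_sub_cancel] at hodd
  have hzero : sigmaOdd 0 = 0 := rfl
  rw [Estar, hodd.tsum_eq, Finset.sum_range_one, hzero, Nat.cast_zero, zero_mul]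
  ring

theorem E2_neg_one_div {t : ℂ} (ht : 0 < t.im) :
    E2 (ofComplex (-1 / t)) = t ^ 2 * E2 (ofComplex t) - 6 * I / π * t := by
  have ht_ne := ne_zero_of_im_pos ht
  have hpi : (π : ℂ) ≠ 0 := ofReal_ne_zero.mpr Real.pi_ne_zero
  have h := congrFun (EisensteinSeries.E2_slash_action S) ⟨t, ht⟩
  rw [SlashInvariantForm.slash_S_apply, Pi.sub_apply, Pi.smul_apply, EisensteinSeries.D2_S,
    riemannZeta_two, smul_eq_mul, zpow_neg, ← div_eq_mul_inv, div_eq_iff (zpow_ne_zero 2 ht_ne),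
    zpow_ofNat] at h
  have hS : (-t)⁻¹ = -1 / t := by rw [neg_div, one_div, inv_neg]
  simp only [hS] at h
  rw [ofComplex_apply_of_im_pos ht, ofComplex_apply_of_im_pos (im_neg_one_div_pos ht), h]
  field_simp

theorem Estar_add_one (t : ℂ) : Estar (t + 1) = Estar t := by
  have hnome : nome 1 = 1 := by rw [nome, mul_one, exp_two_pi_mul_I]
  simp only [Estar, nome_add, hnome, mul_one]

theorem Estar_neg_one_div {t : ℂ} (ht : 0 < t.im) :
    Estar (-1 / t) = t ^ 2 * (-Estar (t / 2) / 2) := by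
  have ht2 : 0 < (t / 2).im := by simpa using ht
  rw [Estar_eq_E2 (im_neg_one_div_pos ht), Estar_eq_E2 ht2,
    show 2 * (-1 / t) = -1 / (t / 2) by field_simp, E2_neg_one_div ht, E2_neg_one_div ht2,
    mul_div_cancel₀ t two_ne_zero]
  ring

theorem differentiableOn_Estar : DifferentiableOn ℂ Estar {t | 0 < t.im} := by
  have hE2 : DifferentiableOn ℂ (fun t ↦ E2 (ofComplex t)) {t | 0 < t.im} :=
    mdifferentiable_iff.mp E2_mdifferentiable
  have hdouble : DifferentiableOn ℂ (fun t ↦ E2 (ofComplex (2 * t))) {t | 0 < t.im} :=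
    hE2.comp (f := fun t ↦ 2 * t) (by fun_prop) fun t ht ↦ by simpa using ht
  exact ((hdouble.const_mul 2).sub hE2).congr fun t ht ↦ Estar_eq_E2 ht

theorem tendsto_E2 : Tendsto E2 atImInfty (𝓝 1) := by
  have h := tendsto_atImInfty_of_hasSum_qExpansion (f := E2) one_pos fun z ↦ by
    simpa only [Function.Periodic.qParam, ofReal_one, div_one] using
      EisensteinSeries.hasSum_qExpansion_E2 (z := z)
  rwa [if_pos rfl] at h

theorem tendsto_Estar : Tendsto Estar I∞ (𝓝 1) := by
  have hE2 := tendsto_E2.comp tendsto_comap_im_ofComplex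
  have him : ∀ᶠ t : ℂ in I∞, 0 < t.im := tendsto_comap.eventually_gt_atTop 0
  have hlim := ((hE2.comp tendsto_two_mul_comap_im).const_mul 2).sub hE2
  rw [show (2 : ℂ) * 1 - 1 = 1 by norm_num] at hlim
  exact hlim.congr' (him.mono fun t ht ↦ (Estar_eq_E2 ht).symm)

theorem isModularGammaZeroTwo_Estar : IsModularGammaZeroTwo 2 fun z : ℍ ↦ Estar z := by
  refine .of_neg_one_div differentiableOn_Estar (fun t _ ↦ Estar_add_one t) (fun t _ ↦ ?_)
    (fun t ht ↦ Estar_neg_one_div ht) tendsto_Estar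
    ((tendsto_Estar.comp tendsto_div_two_comap_im).neg.div_const 2)
  rw [show (t + 2) / 2 = t / 2 + 1 by ring, Estar_add_one]

/-- For `τ ∈ ℍ`: `16Θ₂(τ)⁴ + Θ₃(τ)⁴ = E*(4τ)`. -/
theorem stmt9 (τ : ℂ) (hτ : 0 < τ.im) :
    16 * Theta2 τ ^ 4 + Theta3 τ ^ 4 = Estar (4 * τ) := by
  have heq : (fun z : ℍ ↦ thetaQuartic z) = fun z : ℍ ↦ Estar z :=
    isModularGammaZeroTwo_thetaQuartic.eq_of_tendsto isModularGammaZeroTwo_Estar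
      even_two (by norm_num) (tendsto_thetaQuartic.comp tendsto_coe_atImInfty)
      (tendsto_Estar.comp tendsto_coe_atImInfty)
  have hτ4 : 4 * τ / 4 = τ := by ring
  simpa only [thetaQuartic, hτ4] using congrFun heq ⟨4 * τ, by simpa using hτ⟩
end
end
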